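/- arXiv:1206.2233 — 4 statements merged into one kernel-verified Lean document; each statement's English description precedes it below -/
import Mathlib

section
/- Let M be a finitely generated FI-module over ℂ. For a partition λ of n let σ_λ ∈ S_n be a permutation of cycle type λ; since bijections are FI-morphisms, M(σ_λ) is a linear automorphism of the finite-dimensional space M_n, and its trace trace(σ_λ | M) depends only on λ. Define the enhanced Hilbert series H̃_M = Σ_λ trace(σ_λ | M) · t^λ/λ!, a formal power series in the variables t_1, t_2, …, the sum being over all partitions λ. Then there exist an integer n₀ and unique polynomials p, q ∈ ℚ[t_1,…,t_{n₀}] such that H̃_M = p · exp(t_1 + t_2 + t_3 + ⋯) + q. -/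
open CategoryTheory

structure FIObj where
  α : Type
  fin : Fintype α

instance (S : FIObj) : Fintype S.α := S.fin

def FIObj.of (α : Type) [Fintype α] : FIObj := ⟨α, inferInstance⟩

instance : Category FIObj where
  Hom S T := {f : S.α → T.α // Function.Injective f}
  id S := ⟨id, Function.injective_id⟩
  comp f g := ⟨g.1 ∘ f.1, g.2.comp f.2⟩

/-- FI-modules over ℂ: functors from FI to ℂ-vector spaces. -/
abbrev FIMod := FIObj ⥤ ModuleCat.{0} ℂ

/-- A sub-FI-module. -/
structure FISub (M : FIMod) where
  carrier : ∀ S : FIObj, Submodule ℂ (M.obj S)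
  map_mem : ∀ {S T : FIObj} (f : S ⟶ T) (x : M.obj S), x ∈ carrier S → M.map f x ∈ carrier T

/-- A finitely generated FI-module. -/
def FIMod.FG (M : FIMod) : Prop :=
  ∃ (k : ℕ) (S : Fin k → FIObj) (m : ∀ i, M.obj (S i)),
    ∀ N : FISub M, (∀ i, m i ∈ N.carrier (S i)) → ∀ T, N.carrier T = ⊤
/-- The trace of the automorphism of `M_n = M({1,…,n})` induced by a permutation σ. -/
noncomputable def traceOfPerm (M : FIMod) (n : ℕ) (σ : Equiv.Perm (Fin n)) : ℂ :=
  LinearMap.trace ℂ (M.obj (FIObj.of (Fin n))) (M.map (⟨σ, σ.injective⟩ :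
    FIObj.of (Fin n) ⟶ FIObj.of (Fin n))).hom

/-- The multiplicity function of a partition, as a monomial exponent: the variable of
index `i` (representing `t_{i+1}`) gets exponent `m_{i+1}(λ)`, the number of parts of λ
equal to `i+1`. -/
noncomputable def partMonomial (s : Multiset ℕ) : ℕ →₀ ℕ :=
  Finsupp.comapDomain Nat.succ (Multiset.toFinsupp s) (Nat.succ_injective.injOn)

/-- `λ! = ∏_i m_i(λ)!`, in terms of the multiplicity function. -/
noncomputable def partFactorial (d : ℕ →₀ ℕ) : ℚ :=
  ∏ i ∈ d.support, (Nat.factorial (d i) : ℚ)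

/-- The formal power series `exp(t_1 + t_2 + t_3 + ⋯)`: the coefficient of the monomial
with exponents e is `∏_i 1/(e_i)!`. -/
noncomputable def expTzero : MvPowerSeries ℕ ℚ :=
  fun e => ∏ i ∈ e.support, (1 / (Nat.factorial (e i) : ℚ))

/-- The property that `H̃_M = p·exp(t_1+t_2+⋯) + q`: for every n and every permutation σ
of `{1,…,n}` with cycle type (partition) λ, the trace of σ on `M_n` equals λ! times the
coefficient of `t^λ` in the series `p·exp(t_1+t_2+⋯) + q` (variable i of `Fin n₀`
represents `t_{i+1}`). -/
def IsEnhancedHilbertPair (M : FIMod) (n₀ : ℕ) (p q : MvPolynomial (Fin n₀) ℚ) : Prop :=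
  ∀ (n : ℕ) (σ : Equiv.Perm (Fin n)),
    traceOfPerm M n σ =
      algebraMap ℚ ℂ (partFactorial (partMonomial σ.partition.parts) *
        MvPowerSeries.coeff (partMonomial σ.partition.parts)
          ((MvPolynomial.rename (Fin.val) p : MvPowerSeries ℕ ℚ) * expTzero +
            (MvPolynomial.rename (Fin.val) q : MvPowerSeries ℕ ℚ)))


/-! ## Linear algebra -/

lemma trace_exact {V U Q : Type} [AddCommGroup V] [Module ℂ V] [AddCommGroup U] [Module ℂ U]
    [AddCommGroup Q] [Module ℂ Q] [FiniteDimensional ℂ V] [FiniteDimensional ℂ U]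
    [FiniteDimensional ℂ Q] (i : U →ₗ[ℂ] V) (p : V →ₗ[ℂ] Q) (hi : Function.Injective i)
    (hp : Function.Surjective p) (hex : LinearMap.ker p = LinearMap.range i)
    (g : V →ₗ[ℂ] V) (g' : U →ₗ[ℂ] U) (g'' : Q →ₗ[ℂ] Q)
    (h1 : ∀ x, g (i x) = i (g' x)) (h2 : ∀ x, p (g x) = g'' (p x)) :
    LinearMap.trace ℂ V g = LinearMap.trace ℂ U g' + LinearMap.trace ℂ Q g'' := by
  obtain ⟨s, hs⟩ := p.exists_rightInverse_of_surjective (LinearMap.range_eq_top.2 hp)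
  obtain ⟨r0, hr0⟩ := i.exists_leftInverse_of_injective (LinearMap.ker_eq_bot.2 hi)
  have hs' : ∀ x, p (s x) = x := fun x => LinearMap.congr_fun hs x
  have hr0' : ∀ x, r0 (i x) = x := fun x => LinearMap.congr_fun hr0 x
  have hpi : ∀ x, p (i x) = 0 := fun x => by
    have : i x ∈ LinearMap.ker p := by rw [hex]; exact ⟨x, rfl⟩
    exact this
  let r : V →ₗ[ℂ] U := r0 ∘ₗ (LinearMap.id - s ∘ₗ p)
  have hid : ∀ x, i (r x) + s (p x) = x := by
    intro x
    have : x - s (p x) ∈ LinearMap.range i := by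
      rw [← hex]; simp [hs']
    obtain ⟨y, hy⟩ := this
    have : r x = y := by
      simp only [r, LinearMap.comp_apply, LinearMap.sub_apply, LinearMap.id_apply]
      rw [← hy, hr0']
    rw [this, hy]; simp
  have hri : ∀ x, r (i x) = x := by
    intro x
    simp [r, hpi, hr0']
  have e1 : g = (g ∘ₗ i) ∘ₗ r + (g ∘ₗ s) ∘ₗ p := by
    ext x
    simp only [LinearMap.add_apply, LinearMap.comp_apply]
    rw [← map_add, hid]
  have e2 : r ∘ₗ (g ∘ₗ i) = g' := by
    ext x; simp [h1, hri]
  have e3 : p ∘ₗ (g ∘ₗ s) = g'' := by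
    ext x; simp [h2, hs']
  rw [e1, map_add, LinearMap.trace_comp_comm' r (g ∘ₗ i), LinearMap.trace_comp_comm' p (g ∘ₗ s), e2, e3]

lemma trace_intertwine {V W : Type} [AddCommGroup V] [Module ℂ V] [AddCommGroup W] [Module ℂ W]
    (e : V ≃ₗ[ℂ] W) (f : V →ₗ[ℂ] V) (g : W →ₗ[ℂ] W) (h : ∀ x, e (f x) = g (e x)) :
    LinearMap.trace ℂ V f = LinearMap.trace ℂ W g := by
  rw [← LinearMap.trace_conj' f e]
  congr 1
  ext x
  simp [LinearEquiv.conj_apply, h]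

lemma trace_pi' {ι : Type} [Fintype ι] [DecidableEq ι] (W : ι → Type)
    [∀ i, AddCommGroup (W i)] [∀ i, Module ℂ (W i)] [∀ i, FiniteDimensional ℂ (W i)]
    (h : (∀ i, W i) →ₗ[ℂ] (∀ i, W i)) :
    LinearMap.trace ℂ _ h =
      ∑ i, LinearMap.trace ℂ (W i) (LinearMap.proj i ∘ₗ h ∘ₗ LinearMap.single ℂ W i) := by
  have e1 : h = ∑ i, (h ∘ₗ LinearMap.single ℂ W i) ∘ₗ LinearMap.proj i := by
    refine LinearMap.ext fun x => ?_
    simp only [LinearMap.sum_apply, LinearMap.comp_apply]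
    rw [← map_sum]
    congr 1
    ext j
    simp [Finset.sum_apply]
  conv_lhs => rw [e1]
  rw [map_sum]
  refine Finset.sum_congr rfl fun i _ => ?_
  rw [LinearMap.trace_comp_comm']

/-! ## Rationality of traces -/

lemma trace_pow_eq {V : Type} [AddCommGroup V] [Module ℂ V] [FiniteDimensional ℂ V]
    (f : Module.End ℂ V) (N : ℕ) (hN : 0 < N) (hf : f ^ N = 1) (ζ : ℂ)
    (hζ : IsPrimitiveRoot ζ N) :
    ∃ m : ℕ → ℕ, ∀ j, LinearMap.trace ℂ V (f ^ j) =
      ∑ a ∈ Finset.range N, (m a : ℂ) * (ζ ^ a) ^ j := by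
  have hN0 : (N : ℂ) ≠ 0 := by exact_mod_cast hN.ne'
  have hz0 : ζ ≠ 0 := hζ.ne_zero hN.ne'
  let e : ℕ → Module.End ℂ V := fun a =>
    (N : ℂ)⁻¹ • ∑ j ∈ Finset.range N, ((ζ ^ a)⁻¹) ^ j • f ^ j
  have hfe : ∀ a, f * e a = (ζ ^ a) • e a := by
    intro a
    simp only [e]
    rw [mul_smul_comm, smul_comm (ζ ^ a)]
    congr 1
    rw [Finset.mul_sum, Finset.smul_sum]
    have hw : ζ ^ a ≠ 0 := pow_ne_zero _ hz0
    have h1 : ∀ j, f * ((ζ ^ a)⁻¹ ^ j • f ^ j) = (ζ ^ a) • ((ζ ^ a)⁻¹ ^ (j + 1) • f ^ (j + 1)) := by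
      intro j
      rw [mul_smul_comm, ← pow_succ', smul_smul]
      congr 1
      rw [pow_succ' (ζ ^ a)⁻¹, ← mul_assoc, mul_inv_cancel₀ hw, one_mul]
    rw [Finset.sum_congr rfl fun j _ => h1 j]
    rw [← Finset.smul_sum, ← Finset.smul_sum]
    congr 1
    have := Finset.sum_range_succ (fun j => (ζ ^ a)⁻¹ ^ j • f ^ j) N
    rw [Finset.sum_range_succ'] at this
    have hwN : (ζ ^ a)⁻¹ ^ N = 1 := by
      rw [inv_pow, ← pow_mul, mul_comm, pow_mul, hζ.pow_eq_one]; simp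
    rw [hwN, hf] at this
    simpa using this
  have hfje : ∀ a j, f ^ j * e a = (ζ ^ a) ^ j • e a := by
    intro a j
    induction j with
    | zero => simp
    | succ j ih => rw [pow_succ, mul_assoc, hfe, mul_smul_comm, ih, smul_smul, pow_succ, mul_comm]
  have hidem : ∀ a, IsIdempotentElem (e a) := by
    intro a
    change e a * e a = e a
    have hw : ζ ^ a ≠ 0 := pow_ne_zero _ hz0
    conv_lhs => enter [1]; simp only [e]
    rw [smul_mul_assoc, Finset.sum_mul]
    have : ∀ j, ((ζ ^ a)⁻¹ ^ j • f ^ j) * e a = e a := by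
      intro j
      rw [smul_mul_assoc, hfje, smul_smul, ← mul_pow, inv_mul_cancel₀ hw, one_pow, one_smul]
    rw [Finset.sum_congr rfl fun j _ => this j, Finset.sum_const, Finset.card_range,
      ← Nat.cast_smul_eq_nsmul ℂ, smul_smul, inv_mul_cancel₀ hN0, one_smul]
  have hsum : ∑ a ∈ Finset.range N, e a = 1 := by
    simp only [e]
    rw [← Finset.smul_sum, Finset.sum_comm]
    have : ∀ j ∈ Finset.range N, ∑ a ∈ Finset.range N, (ζ ^ a)⁻¹ ^ j • f ^ j =
        if j = 0 then (N : ℂ) • (1 : Module.End ℂ V) else 0 := by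
      intro j hj
      rw [← Finset.sum_smul]
      split_ifs with h0
      · subst h0; simp
      · have hx : ((ζ ^ j)⁻¹ - 1) ≠ 0 := by
          rw [sub_ne_zero]
          intro h
          exact hζ.pow_ne_one_of_pos_of_lt h0 (Finset.mem_range.1 hj) (inv_eq_one.1 h)
        have h2 : ((ζ ^ j)⁻¹ - 1) * ∑ a ∈ Finset.range N, (ζ ^ a)⁻¹ ^ j = 0 := by
          have h3 := mul_geom_sum ((ζ ^ j)⁻¹) N
          have h4 : ((ζ ^ j)⁻¹) ^ N = 1 := by
            rw [inv_pow, ← pow_mul, mul_comm, pow_mul, hζ.pow_eq_one]; simp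
          rw [h4, sub_self] at h3
          rw [← h3]
          congr 1
          refine Finset.sum_congr rfl fun a _ => ?_
          rw [inv_pow, inv_pow, ← pow_mul, ← pow_mul, mul_comm]
        rw [(mul_eq_zero.1 h2).resolve_left hx, zero_smul]
    rw [Finset.sum_congr rfl this]
    simp [hN, smul_smul, inv_mul_cancel₀ hN0]
  refine ⟨fun a => Module.finrank ℂ (LinearMap.range (e a)), fun j => ?_⟩
  have : f ^ j = ∑ a ∈ Finset.range N, (ζ ^ a) ^ j • e a := by
    rw [← Finset.sum_congr rfl fun a _ => hfje a j, ← Finset.mul_sum, hsum, mul_one]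
  rw [this, map_sum]
  refine Finset.sum_congr rfl fun a _ => ?_
  rw [map_smul, smul_eq_mul, mul_comm]
  congr 1
  exact (LinearMap.IsIdempotentElem.isProj_range _ (hidem a)).trace

lemma trace_rational_aux (N : ℕ) (hN : 0 < N) (K : Type) [Field K] [Algebra ℚ K]
    [IsCyclotomicExtension {N} ℚ K] {V : Type} [AddCommGroup V] [Module ℂ V] [FiniteDimensional ℂ V]
    (f : Module.End ℂ V) (hf : f ^ N = 1)
    (hc : ∀ k, Nat.Coprime k N → LinearMap.trace ℂ V (f ^ k) = LinearMap.trace ℂ V f) :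
    ∃ c : ℚ, LinearMap.trace ℂ V f = algebraMap ℚ ℂ c := by
  have : NeZero N := ⟨hN.ne'⟩
  let z : K := IsCyclotomicExtension.zeta N ℚ K
  have hz : IsPrimitiveRoot z N := IsCyclotomicExtension.zeta_spec N ℚ K
  have : IsGalois ℚ K := IsCyclotomicExtension.isGalois {N} ℚ K
  have : FiniteDimensional ℚ K := IsCyclotomicExtension.finiteDimensional {N} ℚ K
  let φ : K →ₐ[ℚ] ℂ := IsAlgClosed.lift
  have hφz : IsPrimitiveRoot (φ z) N := hz.map_of_injective φ.toRingHom.injective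
  obtain ⟨m, hm⟩ := trace_pow_eq f N hN hf (φ z) hφz
  let x : K := ∑ a ∈ Finset.range N, (m a : K) * z ^ a
  have hx : φ x = LinearMap.trace ℂ V f := by
    rw [← pow_one f, hm 1]
    simp [x]
  have hmem : x ∈ (⊥ : IntermediateField ℚ K) := by
    rw [IsGalois.mem_bot_iff_fixed]
    intro g
    have hgz : IsPrimitiveRoot (g z) N := hz.map_of_injective g.injective
    obtain ⟨k, -, hk⟩ := hz.eq_pow_of_pow_eq_one hgz.pow_eq_one
    have hkc : Nat.Coprime k N := by
      rw [← hk] at hgz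
      exact (hz.pow_iff_coprime hN k).1 hgz
    apply φ.toRingHom.injective
    change φ (g x) = φ x
    rw [hx, ← hc k hkc, hm k]
    simp only [x, map_sum, map_mul, map_natCast, map_pow, ← hk]
    refine Finset.sum_congr rfl fun a _ => ?_
    rw [← pow_mul, ← pow_mul, mul_comm k]
  obtain ⟨c, hc'⟩ := IntermediateField.mem_bot.1 hmem
  exact ⟨c, by rw [← hx, ← hc', AlgHom.commutes]⟩

lemma trace_rational {V : Type} [AddCommGroup V] [Module ℂ V] [FiniteDimensional ℂ V]
    (f : Module.End ℂ V) (N : ℕ) (hN : 0 < N) (hf : f ^ N = 1)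
    (hc : ∀ k, Nat.Coprime k N → LinearMap.trace ℂ V (f ^ k) = LinearMap.trace ℂ V f) :
    ∃ c : ℚ, LinearMap.trace ℂ V f = algebraMap ℚ ℂ c := by
  have : NeZero N := ⟨hN.ne'⟩
  have : NeZero (N : ℚ) := ⟨by exact_mod_cast hN.ne'⟩
  have := CyclotomicField.isCyclotomicExtension N ℚ
  exact @trace_rational_aux N hN (CyclotomicField N ℚ) _ (CyclotomicField.algebra N ℚ) this V _ _ _ f hf hc

lemma cycleType_pow_coprime {α : Type} [Fintype α] [DecidableEq α] (σ : Equiv.Perm α) (k : ℕ)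
    (h : Nat.Coprime k (orderOf σ)) : (σ ^ k).cycleType = σ.cycleType := by
  induction σ using Equiv.Perm.cycle_induction_on with
  | base_one => simp
  | base_cycles σ hσ =>
    rw [(hσ.pow_iff.2 h).cycleType, hσ.cycleType, Equiv.Perm.support_pow_coprime h]
  | induction_disjoint σ τ hd hσ h1 h2 =>
    rw [hd.commute.mul_pow, Equiv.Perm.Disjoint.cycleType_mul, hd.cycleType_mul, h1, h2]
    · rw [hd.orderOf] at h
      exact h.coprime_dvd_right (Nat.dvd_lcm_right _ _)
    · rw [hd.orderOf] at h
      exact h.coprime_dvd_right (Nat.dvd_lcm_left _ _)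
    · exact hd.pow_disjoint_pow k k

/-! ## Unbundled finite-dimensional FI-modules -/

structure FM where
  V : (α : Type) → [Finite α] → Type
  acg : ∀ (α : Type) [Finite α], AddCommGroup (V α)
  mod : ∀ (α : Type) [Finite α], Module ℂ (V α)
  fd : ∀ (α : Type) [Finite α], FiniteDimensional ℂ (V α)
  mp : ∀ {α β : Type} [Finite α] [Finite β], (α ↪ β) → V α →ₗ[ℂ] V β
  mp_id : ∀ {α : Type} [Finite α] (x : V α), mp (Function.Embedding.refl α) x = x
  mp_mp : ∀ {α β γ : Type} [Finite α] [Finite β] [Finite γ] (f : α ↪ β) (g : β ↪ γ) (x : V α),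
    mp g (mp f x) = mp (f.trans g) x

attribute [instance] FM.acg FM.mod FM.fd

namespace FM

open Function

abbrev so (α : Type) : α ↪ Option α := Embedding.some

lemma mp_id' (M : FM) {α : Type} [Finite α] (f : α ↪ α) (h : ∀ a, f a = a) (x : M.V α) :
    M.mp f x = x := by
  have : f = Embedding.refl α := by ext a; exact h a
  rw [this, M.mp_id]

lemma mp_equiv_inj (M : FM) {α β : Type} [Finite α] [Finite β] (e : α ≃ β) :
    Injective (M.mp e.toEmbedding) := by
  apply LeftInverse.injective (g := M.mp e.symm.toEmbedding)
  intro x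
  rw [M.mp_mp]
  convert M.mp_id x using 2
  ext a; simp

lemma exists_equiv {α β γ : Type} [Finite α] [Finite β] [Finite γ] (f : α ↪ β) (g : α ↪ γ)
    (h : Nat.card β = Nat.card γ) : ∃ e : β ≃ γ, f.trans e.toEmbedding = g := by
  classical
  obtain ⟨e0⟩ := Finite.card_eq.1 h
  have := Fintype.ofFinite α
  have := Fintype.ofFinite β
  have := Fintype.ofFinite γ
  let g' : α ↪ β := g.trans e0.symm.toEmbedding
  let e1 : Set.range f ≃ Set.range g' :=
    (Equiv.ofInjective f f.injective).symm.trans (Equiv.ofInjective g' g'.injective)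
  let e2 : Equiv.Perm β := Equiv.extendSubtype (p := (· ∈ Set.range f)) (q := (· ∈ Set.range g')) e1
  refine ⟨e2.trans e0, ?_⟩
  ext a
  have : e2 (f a) = g' a := by
    rw [Equiv.extendSubtype_apply_of_mem (p := (· ∈ Set.range f)) (q := (· ∈ Set.range g')) e1 (f a) ⟨a, rfl⟩]
    simp [e1]
  simp [this, g']

/-- vanishing under a map depends only on the size of the target -/
lemma mp_zero_iff (M : FM) {α β γ : Type} [Finite α] [Finite β] [Finite γ] (f : α ↪ β) (g : α ↪ γ)
    (h : Nat.card β = Nat.card γ) (x : M.V α) : M.mp f x = 0 ↔ M.mp g x = 0 := by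
  obtain ⟨e, rfl⟩ := exists_equiv f g h
  rw [← M.mp_mp]
  exact (map_eq_zero_iff _ (M.mp_equiv_inj e)).symm

/-- shift -/
def Sh (M : FM) : FM where
  V α _ := M.V (Option α)
  acg _ := inferInstance
  mod _ := inferInstance
  fd _ := inferInstance
  mp f := M.mp f.optionMap
  mp_id x := by
    exact M.mp_id' _ (fun a => by cases a <;> rfl) x
  mp_mp f g x := by
    rw [M.mp_mp]
    congr 2
    ext a; simp

/-- the derivative -/
def D (M : FM) : FM where
  V α _ := M.V (Option α) ⧸ LinearMap.range (M.mp (so α))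
  acg _ := inferInstance
  mod _ := inferInstance
  fd _ := inferInstance
  mp {α β} _ _ f := Submodule.mapQ _ _ (M.mp f.optionMap) (by
    rintro _ ⟨x, rfl⟩
    refine ⟨M.mp f x, ?_⟩
    rw [M.mp_mp, M.mp_mp]
    congr 2)
  mp_id x := by
    obtain ⟨x, rfl⟩ := Submodule.mkQ_surjective _ x
    simp only [Submodule.mkQ_apply, Submodule.mapQ_apply]
    congr 1
    exact M.mp_id' _ (fun a => by cases a <;> rfl) x
  mp_mp f g x := by
    obtain ⟨x, rfl⟩ := Submodule.mkQ_surjective _ x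
    simp only [Submodule.mkQ_apply, Submodule.mapQ_apply]
    congr 1
    rw [M.mp_mp]
    congr 2
    ext a; simp

def dq (M : FM) (α : Type) [Finite α] : M.V (Option α) →ₗ[ℂ] M.D.V α := Submodule.mkQ _

lemma dq_surj (M : FM) (α : Type) [Finite α] : Surjective (M.dq α) := Submodule.mkQ_surjective _

lemma dq_mp (M : FM) {α β : Type} [Finite α] [Finite β] (f : α ↪ β) (x : M.V (Option α)) :
    M.D.mp f (M.dq α x) = M.dq β (M.mp f.optionMap x) := rfl

lemma ker_dq (M : FM) (α : Type) [Finite α] :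
    LinearMap.ker (M.dq α) = LinearMap.range (M.mp (so α)) := Submodule.ker_mkQ _

lemma dq_eq_zero (M : FM) {α : Type} [Finite α] (x : M.V (Option α)) :
    M.dq α x = 0 ↔ ∃ y, M.mp (so α) y = x := by
  rw [← LinearMap.mem_ker, ker_dq]; rfl

/-- inclusion of a subset -/
abbrev inc {α : Type} (s : Set α) : s ↪ α := Embedding.subtype (· ∈ s)

def Dec (M : FM) (α : Type) [Finite α] : Submodule ℂ (M.V α) :=
  ⨆ s : {s : Set α // s ≠ Set.univ}, LinearMap.range (M.mp (inc s.1))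

lemma range_le_of_image (M : FM) {α β : Type} [Finite α] [Finite β] (f : α ↪ β) (s : Set β)
    (h : ∀ a, f a ∈ s) : LinearMap.range (M.mp f) ≤ LinearMap.range (M.mp (inc s)) := by
  rintro _ ⟨x, rfl⟩
  refine ⟨M.mp (Embedding.codRestrict s f h) x, ?_⟩
  rw [M.mp_mp]
  rfl

lemma mp_mem_Dec (M : FM) {α β : Type} [Finite α] [Finite β] (f : α ↪ β) (hf : ¬ Surjective f)
    (x : M.V α) : M.mp f x ∈ M.Dec β := by
  have h : Set.range f ≠ Set.univ := fun h => hf (Set.range_eq_univ.1 h)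
  refine (le_iSup (fun s : {s : Set β // s ≠ Set.univ} => LinearMap.range (M.mp (inc s.1)))
    ⟨Set.range f, h⟩) ?_
  exact M.range_le_of_image f (Set.range f) (fun a => ⟨a, rfl⟩) ⟨x, rfl⟩

lemma Dec_map (M : FM) {α β : Type} [Finite α] [Finite β] (f : α ↪ β) :
    M.Dec α ≤ (M.Dec β).comap (M.mp f) := by
  refine iSup_le ?_
  rintro ⟨s, hs⟩ _ ⟨x, rfl⟩
  rw [Submodule.mem_comap, M.mp_mp]
  apply M.mp_mem_Dec
  intro h
  apply hs
  ext a
  simp only [Set.mem_univ, iff_true]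
  obtain ⟨b, hb⟩ := h (f a)
  have : (b : α) = a := f.injective hb
  rw [← this]; exact b.2

def H0 (M : FM) : FM where
  V α _ := M.V α ⧸ M.Dec α
  acg _ := inferInstance
  mod _ := inferInstance
  fd _ := inferInstance
  mp f := Submodule.mapQ _ _ (M.mp f) (M.Dec_map f)
  mp_id x := by
    obtain ⟨x, rfl⟩ := Submodule.mkQ_surjective _ x
    simp only [Submodule.mkQ_apply, Submodule.mapQ_apply]
    rw [M.mp_id]
  mp_mp f g x := by
    obtain ⟨x, rfl⟩ := Submodule.mkQ_surjective _ x
    simp only [Submodule.mkQ_apply, Submodule.mapQ_apply]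
    rw [M.mp_mp]

def hq (M : FM) (α : Type) [Finite α] : M.V α →ₗ[ℂ] M.H0.V α := Submodule.mkQ _

lemma hq_surj (M : FM) (α : Type) [Finite α] : Surjective (M.hq α) := Submodule.mkQ_surjective _

lemma hq_mp (M : FM) {α β : Type} [Finite α] [Finite β] (f : α ↪ β) (x : M.V α) :
    M.H0.mp f (M.hq α x) = M.hq β (M.mp f x) := rfl

lemma ker_hq (M : FM) (α : Type) [Finite α] : LinearMap.ker (M.hq α) = M.Dec α :=
  Submodule.ker_mkQ _

/-! ### Good modules -/

def TFree (r : ℕ) (M : FM) : Prop :=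
  ∀ (α : Type) [Finite α], r ≤ Nat.card α → Injective (M.mp (so α))

def Good : ℕ → ℕ → FM → Prop
  | 0, r, M => ∀ (α : Type) [Finite α], r ≤ Nat.card α → Subsingleton (M.V α)
  | k + 1, r, M => TFree r M ∧ Good k r M.D

lemma Good.tfree {k r : ℕ} {M : FM} (h : Good k r M) : TFree r M := by
  cases k with
  | zero =>
    intro α _ hα
    have := h α hα
    exact injective_of_subsingleton _
  | succ k => exact h.1

lemma Good.mono {k r r' : ℕ} (hr : r ≤ r') {M : FM} (h : Good k r M) : Good k r' M := by
  induction k generalizing M with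
  | zero => exact fun α _ hα => h α (hr.trans hα)
  | succ k ih => exact ⟨fun α _ hα => h.1 α (hr.trans hα), ih h.2⟩

structure Iso (M N : FM) where
  e : ∀ (α : Type) [Finite α], M.V α ≃ₗ[ℂ] N.V α
  nat : ∀ {α β : Type} [Finite α] [Finite β] (f : α ↪ β) (x : M.V α),
    e β (M.mp f x) = N.mp f (e α x)

def Iso.D {M N : FM} (i : Iso M N) : Iso M.D N.D where
  e α _ := Submodule.Quotient.equiv _ _ (i.e (Option α)) (by
    ext y
    simp only [Submodule.mem_map, LinearMap.mem_range]
    constructor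
    · rintro ⟨_, ⟨x, rfl⟩, rfl⟩
      exact ⟨i.e α x, (i.nat _ _).symm⟩
    · rintro ⟨x, rfl⟩
      exact ⟨_, ⟨(i.e α).symm x, rfl⟩, by
        have := i.nat (so α) ((i.e α).symm x)
        simpa using this⟩)
  nat f x := by
    obtain ⟨x, rfl⟩ := dq_surj _ _ x
    rw [dq_mp]
    change dq N _ (i.e _ (M.mp _ x)) = N.D.mp f (dq N _ (i.e _ x))
    rw [dq_mp, i.nat]

lemma Good.iso {k r : ℕ} {M N : FM} (i : Iso M N) (h : Good k r M) : Good k r N := by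
  induction k generalizing M N with
  | zero =>
    intro α _ hα
    have := h α hα
    exact (i.e α).symm.toEquiv.subsingleton
  | succ k ih =>
    refine ⟨?_, ih i.D h.2⟩
    intro α _ hα x y hxy
    have h1 := h.1 α hα
    obtain ⟨x, rfl⟩ := (i.e α).surjective x
    obtain ⟨y, rfl⟩ := (i.e α).surjective y
    rw [← i.nat, ← i.nat] at hxy
    rw [h1 ((i.e _).injective hxy)]

def swp {α : Type} : Option (Option α) → Option (Option α)
  | none => some none
  | some none => none
  | some (some a) => some (some a)

lemma swp_swp {α : Type} (x : Option (Option α)) : swp (swp x) = x := by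
  rcases x with _ | _ | a <;> rfl

def swpE (α : Type) : Option (Option α) ≃ Option (Option α) := ⟨swp, swp, swp_swp, swp_swp⟩

noncomputable def swpL (M : FM) (α : Type) [Finite α] :
    M.V (Option (Option α)) ≃ₗ[ℂ] M.V (Option (Option α)) :=
  LinearEquiv.ofInvolutive (M.mp (swpE α).toEmbedding) (by
    intro x
    rw [M.mp_mp]
    exact M.mp_id' _ (fun a => swp_swp a) x)

noncomputable def isoShD (M : FM) : Iso M.D.Sh M.Sh.D where
  e α _ := Submodule.Quotient.equiv _ _ (swpL M α) (by
    ext y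
    simp only [Submodule.mem_map, LinearMap.mem_range]
    constructor
    · rintro ⟨_, ⟨x, rfl⟩, rfl⟩
      refine ⟨x, ?_⟩
      change M.mp _ x = M.mp _ (M.mp _ x)
      rw [M.mp_mp]
      congr 2
      ext1 a; cases a <;> rfl
    · rintro ⟨(x : M.V (Option α)), rfl⟩
      refine ⟨_, ⟨x, rfl⟩, ?_⟩
      change M.mp _ (M.mp _ x) = M.mp _ x
      rw [M.mp_mp]
      congr 2
      ext1 a; cases a <;> rfl)
  nat {α β} _ _ f x := by
    obtain ⟨x, rfl⟩ := dq_surj _ _ x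
    change dq M.Sh _ (M.mp _ (M.mp _ x)) = dq M.Sh _ (M.mp _ (M.mp _ x))
    rw [M.mp_mp, M.mp_mp]
    congr 3
    ext1 a; rcases a with _ | _ | a <;> rfl

lemma Good.sh {k r : ℕ} {M : FM} (h : Good k (r + 1) M) : Good k r M.Sh := by
  induction k generalizing M with
  | zero =>
    intro α _ hα
    exact h (Option α) (by rw [Finite.card_option]; omega)
  | succ k ih =>
    refine ⟨?_, (ih h.2).iso (isoShD M)⟩
    intro α _ hα
    have h1 := h.1 (Option α) (by rw [Finite.card_option]; omega)
    change Injective (M.mp (so α).optionMap)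
    rw [injective_iff_map_eq_zero] at h1 ⊢
    intro x hx
    exact h1 x ((M.mp_zero_iff _ _ rfl x).1 hx)

end FM

namespace FM

open Function

def Gen (d : ℕ) (M : FM) : Prop :=
  ∀ (β : Type) [Finite β],
    (⊤ : Submodule ℂ (M.V β)) ≤ ⨆ s : {s : Set β // Nat.card s < d}, LinearMap.range (M.mp (inc s.1))

lemma Gen.D {d : ℕ} {M : FM} (h : Gen (d + 1) M) : Gen d M.D := by
  intro β _ y _
  obtain ⟨x, rfl⟩ := M.dq_surj β y
  suffices h2 : (⨆ s : {s : Set (Option β) // Nat.card s < d + 1},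
      LinearMap.range (M.mp (inc s.1))) ≤ Submodule.comap (M.dq β)
        (⨆ s : {s : Set β // Nat.card s < d}, LinearMap.range (M.D.mp (inc s.1))) from
    h2 (h (Option β) trivial)
  refine iSup_le ?_
  rintro ⟨s, hs⟩ _ ⟨z, rfl⟩
  rw [Submodule.mem_comap]
  by_cases hn : none ∈ s
  · let t : Set β := {b | some b ∈ s}
    have ht : Nat.card t < d := by
      have : Nat.card (Option t) ≤ Nat.card s := by
        let o : Option t → s := fun a => match a with
          | none => ⟨none, hn⟩
          | some b => ⟨some b.1, b.2⟩
        apply Nat.card_le_card_of_injective o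
        intro a b hab
        rcases a with _ | a <;> rcases b with _ | b <;> simp [o] at hab ⊢
        exact Subtype.ext hab
      rw [Finite.card_option] at this
      omega
    let g : s ↪ Option t := ⟨fun a => match a with
      | ⟨none, _⟩ => none
      | ⟨some b, hb⟩ => some ⟨b, hb⟩, by
        rintro ⟨_ | a, ha⟩ ⟨_ | b, hb⟩ hab <;> simp at hab ⊢
        exact hab⟩
    have hg : inc s = g.trans (inc t).optionMap := by
      ext1 ⟨a, ha⟩
      cases a <;> rfl
    rw [hg, ← M.mp_mp, ← dq_mp]
    exact (le_iSup (fun s : {s : Set β // Nat.card s < d} => LinearMap.range (M.D.mp (inc s.1)))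
      ⟨t, ht⟩) ⟨_, rfl⟩
  · have : M.dq β (M.mp (inc s) z) = 0 := by
      rw [dq_eq_zero]
      have hsome : ∀ a : s, ∃ b : β, some b = a.1 := by
        rintro ⟨_ | a, ha⟩
        · exact absurd ha hn
        · exact ⟨a, rfl⟩
      choose g hg using hsome
      let g' : s ↪ β := ⟨g, fun a b hab => Subtype.ext (by rw [← hg a, ← hg b, hab])⟩
      refine ⟨M.mp g' z, ?_⟩
      rw [M.mp_mp]
      congr 2
      ext1 a
      exact hg a
    rw [this]
    exact zero_mem _

lemma TFree.inj {r : ℕ} {M : FM} (h : TFree r M) {α β : Type} [Finite α] [Finite β] (f : α ↪ β)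
    (hα : r ≤ Nat.card α) (x : M.V α) (hx : M.mp f x = 0) : x = 0 := by
  have key : ∀ m (x : M.V α), M.mp (Embedding.inl : α ↪ α ⊕ Fin m) x = 0 → x = 0 := by
    intro m
    induction m with
    | zero =>
      intro x hx
      rw [M.mp_zero_iff _ (Embedding.refl α) (by simp), M.mp_id] at hx
      exact hx
    | succ m ih =>
      intro x hx
      rw [M.mp_zero_iff _ ((Embedding.inl : α ↪ α ⊕ Fin m).trans (so _))
        (by rw [Finite.card_option]; simp; ring), ← M.mp_mp] at hx
      apply ih
      have h1 := h (α ⊕ Fin m) (by simp; omega)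
      rw [injective_iff_map_eq_zero] at h1
      exact h1 _ hx
  have hle : Nat.card α ≤ Nat.card β := Nat.card_le_card_of_injective f f.injective
  apply key (Nat.card β - Nat.card α)
  rw [M.mp_zero_iff _ f (by simp; omega)]
  exact hx

lemma ker_step {r : ℕ} {M : FM} (h : TFree r M.D) {α : Type} [Finite α] (hα : r ≤ Nat.card α)
    (m : ℕ) (x : M.V (Option α)) (hx : M.mp (Embedding.inl : _ ↪ Option α ⊕ Fin m) x = 0) :
    ∃ y, M.mp (so α) y = x := by
  rw [← dq_eq_zero]
  apply h.inj (Embedding.inl : α ↪ α ⊕ Fin m) hα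
  rw [dq_mp, (M.mp_zero_iff _ _ _ x).1 hx, map_zero]
  rw [Finite.card_option]; simp; ring

lemma ker_chain {r : ℕ} {M : FM} (h : TFree r M.D) (j : ℕ) : ∀ (β : Type) [Finite β],
    Nat.card β = r + j → ∀ (m : ℕ) (x : M.V β), M.mp (Embedding.inl : _ ↪ β ⊕ Fin m) x = 0 →
    ∃ (f : Fin r ↪ β) (y : M.V (Fin r)), M.mp f y = x := by
  induction j with
  | zero =>
    intro β _ hβ m x hx
    have e : β ≃ Fin r := Finite.equivFinOfCardEq hβ
    refine ⟨e.symm.toEmbedding, M.mp e.toEmbedding x, ?_⟩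
    rw [M.mp_mp]
    exact M.mp_id' _ (fun a => by simp) x
  | succ j ih =>
    intro β _ hβ m x hx
    have e : β ≃ Option (Fin (r + j)) := by
      refine Classical.choice (Finite.card_eq.1 ?_)
      rw [hβ, Finite.card_option]; simp; ring
    obtain ⟨y, hy⟩ := ker_step h (α := Fin (r + j)) (by simp) m (M.mp e.toEmbedding x) (by
      rw [M.mp_mp]
      refine (M.mp_zero_iff _ _ ?_ x).1 hx
      simp only [Nat.card_sum, hβ]
      rw [Finite.card_option]; simp; ring)
    have hy0 : M.mp (Embedding.inl : _ ↪ Fin (r + j) ⊕ Fin (m + 1)) y = 0 := by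
      have h1 : M.mp ((so (Fin (r + j))).trans (e.symm.toEmbedding.trans
          (Embedding.inl : _ ↪ β ⊕ Fin m))) y = 0 := by
        rw [← M.mp_mp, hy, M.mp_mp]
        refine (M.mp_zero_iff _ _ ?_ x).1 hx
        rfl
      refine (M.mp_zero_iff _ _ ?_ y).1 h1
      simp [hβ]; ring
    obtain ⟨f, z, hz⟩ := ih (Fin (r + j)) (by simp) (m + 1) y hy0
    refine ⟨(f.trans (so _)).trans e.symm.toEmbedding, z, ?_⟩
    rw [← M.mp_mp, ← M.mp_mp, hz, hy, M.mp_mp]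
    exact M.mp_id' _ (fun a => by simp) x

lemma tfree_of_D {r : ℕ} {M : FM} (h : TFree r M.D) : ∃ r', TFree r' M := by
  let k : ℕ →o Submodule ℂ (M.V (Fin r)) :=
    ⟨fun m => LinearMap.ker (M.mp (Embedding.inl : _ ↪ Fin r ⊕ Fin m)), by
      refine monotone_nat_of_le_succ ?_
      intro m x hx
      rw [LinearMap.mem_ker] at hx ⊢
      rw [M.mp_zero_iff _ ((Embedding.inl : _ ↪ Fin r ⊕ Fin m).trans (so _))
        (by rw [Finite.card_option]; simp; ring), ← M.mp_mp, hx, map_zero]⟩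
  obtain ⟨n0, hn0⟩ := monotone_stabilizes_iff_noetherian.2
    (inferInstance : IsNoetherian ℂ (M.V (Fin r))) k
  refine ⟨r + n0, ?_⟩
  intro α _ hα
  rw [injective_iff_map_eq_zero]
  intro x hx
  obtain ⟨j, hj⟩ := Nat.exists_eq_add_of_le hα
  obtain ⟨f, z, rfl⟩ := ker_chain h (n0 + j) α (by omega) 1 x
    ((M.mp_zero_iff _ _ (by rw [Finite.card_option]; simp) x).1 hx)
  have h1 : z ∈ k (n0 + j + 1) := by
    change M.mp _ z = 0
    rw [M.mp_mp] at hx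
    refine (M.mp_zero_iff _ _ ?_ z).1 hx
    rw [Finite.card_option]; simp; omega
  rw [← hn0 _ (by omega), hn0 (n0 + j) (by omega)] at h1
  refine (M.mp_zero_iff _ _ ?_ z).1 h1
  simp; omega

lemma Gen.good {d : ℕ} {M : FM} (h : Gen d M) : ∃ r, Good d r M := by
  induction d generalizing M with
  | zero =>
    refine ⟨0, fun α _ _ => ?_⟩
    have : IsEmpty {s : Set α // Nat.card s < 0} := ⟨fun s => absurd s.2 (Nat.not_lt_zero _)⟩
    have := h α
    rw [iSup_of_empty, top_le_iff] at this
    exact (Submodule.subsingleton_iff ℂ).1 (subsingleton_of_bot_eq_top this)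
  | succ d ih =>
    obtain ⟨r, hr⟩ := ih h.D
    obtain ⟨r', hr'⟩ := tfree_of_D hr.tfree
    exact ⟨max r r', fun α _ hα => hr' α ((le_max_right _ _).trans hα), hr.mono (le_max_left _ _)⟩

end FM

namespace FM

open Function

noncomputable def ch (M : FM) {α : Type} [Finite α] (σ : Equiv.Perm α) : ℂ :=
  LinearMap.trace ℂ (M.V α) (M.mp σ.toEmbedding)

noncomputable def mpE (M : FM) {α β : Type} [Finite α] [Finite β] (e : α ≃ β) :
    M.V α ≃ₗ[ℂ] M.V β :=
  LinearEquiv.ofLinearMap (M.mp e.toEmbedding) (M.mp e.symm.toEmbedding)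
    (by ext x; simp only [LinearMap.comp_apply, LinearMap.id_apply]; rw [M.mp_mp]
        exact M.mp_id' _ (fun a => by simp) x)
    (by ext x; simp only [LinearMap.comp_apply, LinearMap.id_apply]; rw [M.mp_mp]
        exact M.mp_id' _ (fun a => by simp) x)

lemma mpE_apply (M : FM) {α β : Type} [Finite α] [Finite β] (e : α ≃ β) (x : M.V α) :
    M.mpE e x = M.mp e.toEmbedding x := rfl

lemma finrank_congr (M : FM) {α β : Type} [Finite α] [Finite β] (h : Nat.card α = Nat.card β) :
    Module.finrank ℂ (M.V α) = Module.finrank ℂ (M.V β) :=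
  (M.mpE (Classical.choice (Finite.card_eq.1 h))).finrank_eq

lemma h0_option (M : FM) (α : Type) [Finite α] :
    Module.finrank ℂ (M.H0.V (Option α)) ≤ Module.finrank ℂ (M.D.H0.V α) := by
  let c : M.V (Option α) →ₗ[ℂ] M.D.H0.V α := M.D.hq α ∘ₗ M.dq α
  have hc : Surjective c := (M.D.hq_surj α).comp (M.dq_surj α)
  have hker : LinearMap.ker c ≤ LinearMap.ker (M.hq (Option α)) := by
    rw [ker_hq]
    intro x hx
    have h1 : M.dq α x ∈ M.D.Dec α := by
      rw [← ker_hq]; exact hx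
    have h2 : M.D.Dec α ≤ (M.Dec (Option α)).map (M.dq α) := by
      refine iSup_le ?_
      rintro ⟨s, hs⟩ _ ⟨y, rfl⟩
      obtain ⟨y, rfl⟩ := M.dq_surj _ y
      rw [dq_mp]
      refine ⟨_, M.mp_mem_Dec _ ?_ _, rfl⟩
      intro hsurj
      apply hs
      ext a
      simp only [Set.mem_univ, iff_true]
      obtain ⟨b, hb⟩ := hsurj (some a)
      rcases b with _ | b
      · simp at hb
      · simp at hb
        rw [← hb]; exact b.2
    obtain ⟨x', hx', he⟩ := h2 h1
    have h3 : M.dq α (x - x') = 0 := by rw [map_sub, he, sub_self]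
    obtain ⟨y, hy⟩ := (M.dq_eq_zero _).1 h3
    have h4 : x - x' ∈ M.Dec (Option α) := by
      rw [← hy]
      apply M.mp_mem_Dec
      intro hsurj
      obtain ⟨b, hb⟩ := hsurj none
      simp at hb
    have := add_mem h4 hx'
    simpa using this
  have e1 := LinearMap.finrank_range_add_finrank_ker c
  have e2 := LinearMap.finrank_range_add_finrank_ker (M.hq (Option α))
  rw [LinearMap.range_eq_top.2 hc, finrank_top] at e1
  rw [LinearMap.range_eq_top.2 (M.hq_surj _), finrank_top] at e2
  have := Submodule.finrank_mono hker
  omega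

lemma Good.h0_zero {k r : ℕ} {M : FM} (h : Good k 0 M) (hr : k ≤ r) :
    Module.finrank ℂ (M.H0.V (Fin r)) = 0 := by
  induction k generalizing M r with
  | zero =>
    have := h (Fin r) (Nat.zero_le _)
    have : Subsingleton (M.H0.V (Fin r)) := (M.hq_surj _).subsingleton
    exact Module.finrank_zero_of_subsingleton
  | succ k ih =>
    obtain ⟨r, rfl⟩ : ∃ r', r = r' + 1 := ⟨r - 1, by omega⟩
    have h1 := ih h.2 (r := r) (by omega)
    have h2 := M.h0_option (Fin r)
    have h3 := M.H0.finrank_congr (α := Fin (r + 1)) (β := Option (Fin r))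
      (by rw [Finite.card_option]; simp)
    omega

lemma Good.D' {k : ℕ} {M : FM} (h : Good k 0 M) : Good (k - 1) 0 M.D := by
  cases k with
  | zero =>
    intro α _ _
    have := h (Option α) (Nat.zero_le _)
    exact (M.dq_surj _).subsingleton
  | succ k => exact h.2

lemma finrank_D (M : FM) (α : Type) [Finite α] (h : Injective (M.mp (so α))) :
    Module.finrank ℂ (M.V (Option α)) = Module.finrank ℂ (M.V α) + Module.finrank ℂ (M.D.V α) := by
  have e1 := LinearMap.finrank_range_add_finrank_ker (M.dq α)
  rw [LinearMap.range_eq_top.2 (M.dq_surj _), finrank_top, ker_dq,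
    LinearMap.finrank_range_of_inj h] at e1
  omega

lemma Good.dim {k : ℕ} {M : FM} (h : Good k 0 M) (n : ℕ) :
    ∑ A ∈ (Finset.range n).powerset, Module.finrank ℂ (M.H0.V (Fin A.card)) ≤
      Module.finrank ℂ (M.V (Fin n)) := by
  induction n generalizing k M with
  | zero =>
    rw [Finset.range_zero, Finset.powerset_empty, Finset.sum_singleton]
    have h0 : Module.finrank ℂ (M.H0.V (Fin 0)) ≤ Module.finrank ℂ (M.V (Fin 0)) :=
      LinearMap.finrank_le_finrank_of_surjective (f := M.hq (Fin 0)) (M.hq_surj (Fin 0))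
    exact h0
  | succ n ih =>
    rw [Finset.range_add_one, Finset.sum_powerset_insert (by simp)]
    have e := M.finrank_congr (α := Fin (n + 1)) (β := Option (Fin n))
      (by rw [Finite.card_option]; simp)
    rw [e, M.finrank_D _ (h.tfree _ (Nat.zero_le _))]
    refine add_le_add (ih h) (le_trans ?_ (ih h.D'))
    refine Finset.sum_le_sum fun A hA => ?_
    have hn : n ∉ A := fun hn => by
      have := Finset.mem_powerset.1 hA hn
      simp at this
    rw [Finset.card_insert_of_notMem hn]
    rw [M.H0.finrank_congr (α := Fin (A.card + 1)) (β := Option (Fin A.card))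
      (by rw [Finite.card_option]; simp)]
    exact M.h0_option _

abbrev fi {α : Type} (A : Finset α) : {x // x ∈ A} ↪ α := Embedding.subtype (· ∈ A)

lemma exists_sec (M : FM) (α : Type) [Finite α] :
    ∃ s : M.H0.V α →ₗ[ℂ] M.V α, ∀ w, M.hq α (s w) = w := by
  obtain ⟨s, hs⟩ := (M.hq α).exists_rightInverse_of_surjective (LinearMap.range_eq_top.2 (M.hq_surj α))
  exact ⟨s, fun w => LinearMap.congr_fun hs w⟩

noncomputable def sec (M : FM) (α : Type) [Finite α] : M.H0.V α →ₗ[ℂ] M.V α :=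
  (M.exists_sec α).choose

lemma hq_sec (M : FM) (α : Type) [Finite α] (w) : M.hq α (M.sec α w) = w :=
  (M.exists_sec α).choose_spec w

noncomputable def Phi (M : FM) (α : Type) [Fintype α] :
    (∀ A : Finset α, M.H0.V {x // x ∈ A}) →ₗ[ℂ] M.V α :=
  ∑ A : Finset α, (M.mp (fi A) ∘ₗ M.sec _) ∘ₗ LinearMap.proj A

lemma Phi_single (M : FM) (α : Type) [Fintype α] [DecidableEq α] (A : Finset α)
    (w : M.H0.V {x // x ∈ A}) :
    M.Phi α (Pi.single A w) = M.mp (fi A) (M.sec _ w) := by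
  simp only [Phi, LinearMap.sum_apply, LinearMap.comp_apply, LinearMap.proj_apply]
  rw [Finset.sum_eq_single A]
  · simp
  · intro B _ hB
    rw [Pi.single_eq_of_ne hB, map_zero, map_zero]
  · simp

lemma Phi_lift (M : FM) (α : Type) [Fintype α] [DecidableEq α] (B : Finset α) :
    ∀ z : M.V {x // x ∈ B}, ∃ w, M.Phi α w = M.mp (fi B) z ∧ (∀ A, ¬ A ⊆ B → w A = 0) ∧
      w B = M.hq _ z := by
  induction B using Finset.strongInduction with
  | H B ih =>
    let U : Submodule ℂ (∀ A : Finset α, M.H0.V {x // x ∈ A}) :=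
      { carrier := {w | ∀ A, ¬ A ⊂ B → w A = 0}
        add_mem' := fun {a b} ha hb A hA => by simp [ha A hA, hb A hA]
        zero_mem' := fun A _ => rfl
        smul_mem' := fun c a ha A hA => by simp [ha A hA] }
    have hDec : M.Dec {x // x ∈ B} ≤ (U.map (M.Phi α)).comap (M.mp (fi B)) := by
      refine iSup_le ?_
      rintro ⟨s, hs⟩ _ ⟨y, rfl⟩
      classical
      let A : Finset α := Finset.univ.filter (fun a => ∃ h : a ∈ B, (⟨a, h⟩ : {x // x ∈ B}) ∈ s)
      have hAB : A ⊂ B := by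
        refine Finset.ssubset_iff_subset_ne.2 ⟨?_, ?_⟩
        · intro a ha
          exact (Finset.mem_filter.1 ha).2.1
        · intro hAB
          apply hs
          ext ⟨a, ha⟩
          simp only [Set.mem_univ, iff_true]
          rw [← hAB] at ha
          exact (Finset.mem_filter.1 ha).2.2
      let g : s ↪ {x // x ∈ A} :=
        ⟨fun a => ⟨a.1.1, Finset.mem_filter.2 ⟨Finset.mem_univ _, a.1.2, a.2⟩⟩,
          fun a b hab => Subtype.ext (Subtype.ext (congrArg (fun z : {x // x ∈ A} => z.1) hab))⟩
      obtain ⟨w, hw1, hw2, -⟩ := ih A hAB (M.mp g y)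
      rw [Submodule.mem_comap]
      refine ⟨w, ?_, ?_⟩
      · intro C hC
        apply hw2
        intro hCA
        exact hC (lt_of_le_of_lt hCA hAB)
      · rw [hw1, M.mp_mp, M.mp_mp]
        rfl
    intro z
    have hz : z - M.sec _ (M.hq _ z) ∈ M.Dec {x // x ∈ B} := by
      rw [← ker_hq, LinearMap.mem_ker, map_sub, hq_sec, sub_self]
    obtain ⟨w, hw, hwz⟩ := hDec hz
    refine ⟨w + Pi.single B (M.hq _ z), ?_, ?_, ?_⟩
    · rw [map_add, hwz, Phi_single, ← map_add]
      simp
    · intro A hA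
      rw [Pi.add_apply, hw A (fun h => hA h.1), Pi.single_eq_of_ne (by rintro rfl; exact hA le_rfl),
        add_zero]
    · rw [Pi.add_apply, hw B (fun h => h.ne rfl), Pi.single_eq_same, zero_add]

lemma Phi_surj (M : FM) (α : Type) [Fintype α] : Surjective (M.Phi α) := by
  classical
  intro x
  obtain ⟨w, hw, -⟩ := M.Phi_lift α Finset.univ
    (M.mp (⟨fun a => ⟨a, Finset.mem_univ a⟩, fun a b h => congrArg Subtype.val h⟩ :
      α ↪ {x : α // x ∈ Finset.univ}) x)
  refine ⟨w, ?_⟩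
  rw [hw, M.mp_mp]
  exact M.mp_id' _ (fun a => rfl) x

lemma Good.Phi_bij {k : ℕ} {M : FM} (h : Good k 0 M) (α : Type) [Fintype α] :
    Bijective (M.Phi α) := by
  classical
  refine ⟨?_, M.Phi_surj α⟩
  have h1 : Module.finrank ℂ (∀ A : Finset α, M.H0.V {x // x ∈ A}) ≤ Module.finrank ℂ (M.V α) := by
    rw [Module.finrank_pi_fintype]
    refine le_trans (le_of_eq ?_) ((h.dim (Fintype.card α)).trans (le_of_eq ?_))
    · rw [Finset.sum_powerset_apply_card (fun n => Module.finrank ℂ (M.H0.V (Fin n))),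
        Finset.card_range, ← Finset.card_univ,
        ← Finset.sum_powerset_apply_card (fun n => Module.finrank ℂ (M.H0.V (Fin n))),
        Finset.powerset_univ]
      refine Finset.sum_congr rfl fun A _ => ?_
      exact M.H0.finrank_congr (by simp)
    · exact M.finrank_congr (by simp)
  have h2 := LinearMap.finrank_range_add_finrank_ker (M.Phi α)
  rw [LinearMap.range_eq_top.2 (M.Phi_surj α), finrank_top] at h2
  rw [← LinearMap.ker_eq_bot]
  apply Submodule.finrank_eq_zero.1
  omega

theorem Good.ch_decomp {k : ℕ} {M : FM} (h : Good k 0 M) {α : Type} [Fintype α] [DecidableEq α]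
    (σ : Equiv.Perm α) :
    M.ch σ = ∑ A : Finset α, if hA : ∀ x, σ x ∈ A ↔ x ∈ A then
      M.H0.ch (σ.subtypePerm hA) else 0 := by
  let e : (∀ A : Finset α, M.H0.V {x // x ∈ A}) ≃ₗ[ℂ] M.V α :=
    LinearEquiv.ofBijective (M.Phi α) (h.Phi_bij α)
  have he : ∀ w, e w = M.Phi α w := fun w => rfl
  let g : (∀ A : Finset α, M.H0.V {x // x ∈ A}) →ₗ[ℂ] (∀ A : Finset α, M.H0.V {x // x ∈ A}) :=
    e.symm.toLinearMap ∘ₗ M.mp σ.toEmbedding ∘ₗ e.toLinearMap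
  have h1 : M.ch σ = LinearMap.trace ℂ _ g := by
    refine trace_intertwine e.symm _ _ fun x => ?_
    simp [g]
  rw [h1, trace_pi']
  refine Finset.sum_congr rfl fun A _ => ?_
  split_ifs with hA
  · unfold ch
    congr 1
    ext w
    simp only [LinearMap.comp_apply, LinearMap.proj_apply, g, LinearEquiv.coe_coe,
      LinearMap.coe_single]
    rw [he, Phi_single, M.mp_mp]
    obtain ⟨w', hw1, -, hw2⟩ := M.Phi_lift α A (M.mp (σ.subtypePerm hA).toEmbedding (M.sec _ w))
    have : M.mp ((fi A).trans σ.toEmbedding) (M.sec _ w) = e w' := by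
      rw [he, hw1, M.mp_mp]
      rfl
    rw [this, LinearEquiv.symm_apply_apply, hw2, ← hq_mp, hq_sec]
  · convert map_zero (LinearMap.trace ℂ (M.H0.V {x // x ∈ A}))
    ext w
    simp only [LinearMap.comp_apply, LinearMap.proj_apply, g, LinearEquiv.coe_coe,
      LinearMap.coe_single, LinearMap.zero_apply]
    rw [he, Phi_single, M.mp_mp]
    let B : Finset α := A.map σ.toEmbedding
    let s : {x // x ∈ A} ↪ {x // x ∈ B} :=
      ⟨fun a => ⟨σ a.1, Finset.mem_map.2 ⟨a.1, a.2, rfl⟩⟩,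
        fun a b hab => Subtype.ext (σ.injective (congrArg Subtype.val hab))⟩
    obtain ⟨w', hw1, hw2, -⟩ := M.Phi_lift α B (M.mp s (M.sec _ w))
    have : M.mp ((fi A).trans σ.toEmbedding) (M.sec _ w) = e w' := by
      rw [he, hw1, M.mp_mp]
      rfl
    rw [this, LinearEquiv.symm_apply_apply]
    apply hw2
    intro hAB
    apply hA
    have hEq : A = B := Finset.eq_of_subset_of_card_le hAB (by simp [B])
    intro x
    conv_lhs => rw [hEq]
    simp [B]

end FM


/-! ## Orbits and types of permutations -/

noncomputable abbrev ty {α : Type} [Fintype α] [DecidableEq α] (σ : Equiv.Perm α) : ℕ →₀ ℕ :=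
  partMonomial σ.partition.parts

lemma partMonomial_apply (s : Multiset ℕ) (i : ℕ) : partMonomial s i = s.count (i + 1) := by
  simp [partMonomial, Finsupp.comapDomain_apply]

lemma partMonomial_add (s t : Multiset ℕ) : partMonomial (s + t) = partMonomial s + partMonomial t := by
  ext i; simp [partMonomial_apply]

namespace Orb
open Equiv.Perm Finset

variable {α : Type} [Fintype α] [DecidableEq α]

def orb (σ : Equiv.Perm α) (x : α) : Finset α := univ.filter (σ.SameCycle x)

def E (σ : Equiv.Perm α) : Finset (Finset α) := univ.image (orb σ)

lemma mem_orb {σ : Equiv.Perm α} {x y : α} : y ∈ orb σ x ↔ σ.SameCycle x y := by simp [orb]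

lemma self_mem_orb (σ : Equiv.Perm α) (x : α) : x ∈ orb σ x := mem_orb.2 (SameCycle.refl _ _)

lemma orb_eq {σ : Equiv.Perm α} {x y : α} (h : y ∈ orb σ x) : orb σ y = orb σ x := by
  rw [mem_orb] at h
  ext z
  rw [mem_orb, mem_orb]
  exact ⟨fun h' => h.trans h', fun h' => h.symm.trans h'⟩

lemma E_eq (σ : Equiv.Perm α) : E σ = (σ.cycleFactorsFinset.image support).disjUnion
    ((univ.filter (fun x => x ∉ σ.support)).image (fun x => {x})) (by
      rw [Finset.disjoint_left]
      intro o h1 h2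
      obtain ⟨c, hc, rfl⟩ := mem_image.1 h1
      obtain ⟨x, hx, h⟩ := mem_image.1 h2
      have : x ∈ c.support := by rw [← h]; simp
      exact (mem_filter.1 hx).2 (mem_cycleFactorsFinset_support_le hc this)) := by
  ext o
  simp only [E, mem_image, mem_univ, true_and, mem_disjUnion, mem_filter]
  constructor
  · rintro ⟨x, rfl⟩
    by_cases hx : x ∈ σ.support
    · left
      refine ⟨σ.cycleOf x, cycleOf_mem_cycleFactorsFinset_iff.2 hx, ?_⟩
      ext y
      rw [mem_support_cycleOf_iff, mem_orb]
      simp [hx]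
    · right
      refine ⟨x, hx, ?_⟩
      ext y
      rw [mem_orb, mem_singleton]
      rw [notMem_support] at hx
      constructor
      · rintro rfl; exact SameCycle.refl _ _
      · intro h; exact (h.eq_of_left hx).symm
  · rintro (⟨c, hc, rfl⟩ | ⟨x, hx, rfl⟩)
    · obtain ⟨a, ha⟩ := (mem_cycleFactorsFinset_iff.1 hc).1.nonempty_support
      have := cycle_is_cycleOf ha hc
      refine ⟨a, ?_⟩
      have hx := mem_cycleFactorsFinset_support_le hc ha
      rw [this]
      ext y
      rw [mem_support_cycleOf_iff, mem_orb]
      simp [hx]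
    · refine ⟨x, ?_⟩
      ext y
      rw [mem_orb, mem_singleton]
      rw [notMem_support] at hx
      constructor
      · intro h; exact (h.eq_of_left hx).symm
      · rintro rfl; exact SameCycle.refl _ _

lemma parts_eq (σ : Equiv.Perm α) : σ.partition.parts = (E σ).val.map card := by
  rw [E_eq, disjUnion_val, Multiset.map_add, parts_partition, cycleType_def]
  congr 1
  · rw [image_val_of_injOn, Multiset.map_map]
    intro c hc d hd h
    obtain ⟨a, ha⟩ := (mem_cycleFactorsFinset_iff.1 hc).1.nonempty_support
    rw [cycle_is_cycleOf ha hc, cycle_is_cycleOf (h ▸ ha) hd]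
  · rw [image_val_of_injOn (by intro a _ b _ h; simpa using h), Multiset.map_map]
    symm
    rw [Multiset.eq_replicate]
    constructor
    · rw [Multiset.card_map, card_val, filter_not, card_sdiff_of_subset (filter_subset _ _)]
      rw [card_univ, filter_mem_eq_inter, univ_inter]
    · intro b hb
      obtain ⟨x, -, rfl⟩ := Multiset.mem_map.1 hb
      simp

noncomputable def typ (B : Finset (Finset α)) : ℕ →₀ ℕ := ∑ o ∈ B, Finsupp.single (o.card - 1) 1

lemma card_pos_of_mem_E {σ : Equiv.Perm α} {o} (h : o ∈ E σ) : 0 < o.card := by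
  obtain ⟨x, -, rfl⟩ := mem_image.1 h
  exact card_pos.2 ⟨x, self_mem_orb σ x⟩

lemma ty_eq (σ : Equiv.Perm α) : ty σ = typ (E σ) := by
  ext i
  rw [partMonomial_apply, parts_eq, typ, Multiset.count_map, Finsupp.finsetSum_apply]
  simp only [Finsupp.single_apply]
  rw [← Finset.card_filter, Finset.card_def]
  congr 1
  rw [Finset.filter_val]
  apply Multiset.filter_congr
  intro o ho
  have := card_pos_of_mem_E (σ := σ) ho
  omega

variable {β : Type} [Fintype β] [DecidableEq β]

lemma orb_map (σ : Equiv.Perm α) (τ : Equiv.Perm β) (f : β ↪ α) (h : ∀ b, f (τ b) = σ (f b)) (b : β) :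
    orb σ (f b) = (orb τ b).map f := by
  have hs : Function.Semiconj f τ σ := h
  ext y
  rw [mem_orb, mem_map]
  simp only [mem_orb]
  constructor
  · intro hy
    obtain ⟨k, -, hk⟩ := hy.exists_pow_eq'
    refine ⟨(τ ^ k) b, ⟨k, by simp⟩, ?_⟩
    rw [← hk, ← Equiv.Perm.iterate_eq_pow, ← Equiv.Perm.iterate_eq_pow]
    exact hs.iterate_right k b
  · rintro ⟨b', hb, rfl⟩
    obtain ⟨k, -, hk⟩ := hb.exists_pow_eq'
    refine ⟨k, ?_⟩
    rw [zpow_natCast, ← hk, ← Equiv.Perm.iterate_eq_pow, ← Equiv.Perm.iterate_eq_pow]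
    exact (hs.iterate_right k b).symm

lemma ty_map (σ : Equiv.Perm α) (τ : Equiv.Perm β) (f : β ↪ α) (h : ∀ b, f (τ b) = σ (f b)) :
    ty τ = typ ((E σ).filter (fun o => o ⊆ univ.map f)) := by
  have : (E σ).filter (fun o => o ⊆ univ.map f) = (E τ).map ⟨Finset.map f, map_injective f⟩ := by
    ext o
    simp only [mem_filter, E, mem_image, mem_univ, true_and, mem_map, Function.Embedding.coeFn_mk]
    constructor
    · rintro ⟨⟨x, rfl⟩, hx⟩
      obtain ⟨b, -, rfl⟩ := mem_map.1 (hx (self_mem_orb σ x))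
      exact ⟨_, ⟨b, rfl⟩, (orb_map σ τ f h b).symm⟩
    · rintro ⟨_, ⟨b, rfl⟩, rfl⟩
      refine ⟨⟨f b, orb_map σ τ f h b⟩, map_subset_map.2 (subset_univ _)⟩
  rw [ty_eq, this, typ, typ, sum_map]
  simp

lemma ty_equiv (σ : Equiv.Perm α) (τ : Equiv.Perm β) (f : β ≃ α) (h : ∀ b, f (τ b) = σ (f b)) :
    ty τ = ty σ := by
  rw [ty_map σ τ f.toEmbedding h, ty_eq]
  congr 1
  rw [filter_true_of_mem]
  intro o _
  simp

/-- invariant subsets correspond to sets of orbits -/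
lemma sum_inv {R : Type} [AddCommMonoid R] (σ : Equiv.Perm α) (f : Finset α → R) :
    ∑ A ∈ univ.filter (fun A : Finset α => ∀ x, σ x ∈ A ↔ x ∈ A), f A =
      ∑ B ∈ (E σ).powerset, f (B.biUnion id) := by
  have key : ∀ A : Finset α, (∀ x, σ x ∈ A ↔ x ∈ A) → ∀ x ∈ A, orb σ x ⊆ A := by
    intro A hA x hx y hy
    rw [mem_orb] at hy
    obtain ⟨k, -, rfl⟩ := hy.exists_pow_eq'
    clear hy
    induction k with
    | zero => simpa
    | succ k ih => rw [pow_succ', Equiv.Perm.mul_apply, hA]; exact ih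
  refine sum_bij' (fun A _ => (E σ).filter (fun o => o ⊆ A)) (fun B _ => B.biUnion id)
    ?_ ?_ ?_ ?_ ?_
  · intro A _; simp
  · intro B hB
    simp only [mem_filter, mem_univ, true_and, mem_biUnion, id]
    intro x
    refine exists_congr fun o => and_congr_right fun ho => ?_
    obtain ⟨y, -, rfl⟩ := mem_image.1 (mem_powerset.1 hB ho)
    rw [mem_orb, mem_orb, sameCycle_apply_right]
  · intro A hA
    have hA := (mem_filter.1 hA).2
    ext x
    simp only [mem_biUnion, mem_filter, id]
    constructor
    · rintro ⟨o, ⟨-, ho⟩, hx⟩; exact ho hx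
    · intro hx
      exact ⟨orb σ x, ⟨mem_image.2 ⟨x, mem_univ _, rfl⟩, key A hA x hx⟩, self_mem_orb σ x⟩
  · intro B hB
    have hB := mem_powerset.1 hB
    ext o
    simp only [mem_filter]
    constructor
    · rintro ⟨ho, h⟩
      obtain ⟨x, -, rfl⟩ := mem_image.1 ho
      obtain ⟨o', ho', hx⟩ := mem_biUnion.1 (h (self_mem_orb σ x))
      obtain ⟨y, -, rfl⟩ := mem_image.1 (hB ho')
      rw [orb_eq hx]; exact ho'
    · intro ho
      exact ⟨hB ho, subset_biUnion_of_mem id ho⟩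
  · intro A hA
    have hA := (mem_filter.1 hA).2
    congr 1
    ext x
    simp only [mem_biUnion, mem_filter, id]
    constructor
    · intro hx
      exact ⟨orb σ x, ⟨mem_image.2 ⟨x, mem_univ _, rfl⟩, key A hA x hx⟩, self_mem_orb σ x⟩
    · rintro ⟨o, ⟨-, ho⟩, hx⟩; exact ho hx

lemma E_filter (σ : Equiv.Perm α) (B) (hB : B ⊆ E σ) :
    (E σ).filter (fun o => o ⊆ B.biUnion id) = B := by
  ext o
  simp only [mem_filter]
  constructor
  · rintro ⟨ho, h⟩
    obtain ⟨x, -, rfl⟩ := mem_image.1 ho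
    obtain ⟨o', ho', hx⟩ := mem_biUnion.1 (h (self_mem_orb σ x))
    obtain ⟨y, -, rfl⟩ := mem_image.1 (hB ho')
    rw [orb_eq hx]; exact ho'
  · intro ho
    exact ⟨hB ho, subset_biUnion_of_mem id ho⟩

lemma ty_sub (σ : Equiv.Perm α) (A : Finset α) (hA : ∀ x, σ x ∈ A ↔ x ∈ A) :
    ty (σ.subtypePerm hA) = typ ((E σ).filter (fun o => o ⊆ A)) := by
  rw [ty_map σ (σ.subtypePerm hA) (Function.Embedding.subtype (· ∈ A)) (fun b => rfl)]
  congr 2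
  ext o
  have : (univ : Finset {x // x ∈ A}).map (Function.Embedding.subtype (· ∈ A)) = A := by
    ext x; simp
  rw [this]

/-! counting -/

lemma pascal (N : ℕ) (t e : ℕ →₀ ℕ) (j : ℕ) (hj : j < N) :
    ∏ i ∈ range N, ((t + Finsupp.single j 1 : ℕ →₀ ℕ) i).choose (e i) =
      ∏ i ∈ range N, (t i).choose (e i) +
        if e j = 0 then 0 else ∏ i ∈ range N, (t i).choose ((e - Finsupp.single j 1 : ℕ →₀ ℕ) i) := by
  have hj' := mem_range.2 hj
  rw [← mul_prod_erase _ _ hj', ← mul_prod_erase _ (fun i => (t i).choose (e i)) hj',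
    ← mul_prod_erase _ (fun i => (t i).choose ((e - Finsupp.single j 1 : ℕ →₀ ℕ) i)) hj']
  have h1 : ∏ x ∈ (range N).erase j, ((t + Finsupp.single j 1 : ℕ →₀ ℕ) x).choose (e x) =
      ∏ x ∈ (range N).erase j, (t x).choose (e x) := by
    refine prod_congr rfl fun x hx => ?_
    have := (mem_erase.1 hx).1
    simp [Finsupp.single_apply, this.symm]
  have h2 : ∏ x ∈ (range N).erase j, (t x).choose ((e - Finsupp.single j 1 : ℕ →₀ ℕ) x) =
      ∏ x ∈ (range N).erase j, (t x).choose (e x) := by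
    refine prod_congr rfl fun x hx => ?_
    have := (mem_erase.1 hx).1
    simp [Finsupp.single_apply, this.symm]
  rw [h1, h2]
  rcases h : e j with _ | m
  · simp
  · simp [h, Nat.choose_succ_succ]
    ring

lemma count_typ (N : ℕ) (S : Finset (Finset α)) (hS : ∀ o ∈ S, o.card - 1 < N) (e : ℕ →₀ ℕ)
    (he : ∀ i, N ≤ i → e i = 0) :
    ∑ B ∈ S.powerset, (if typ B = e then 1 else 0) = ∏ i ∈ range N, (typ S i).choose (e i) := by
  induction S using Finset.induction_on generalizing e with
  | empty =>
    simp only [powerset_empty, sum_singleton]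
    have : typ (∅ : Finset (Finset α)) = 0 := by simp [typ]
    rw [this]
    split_ifs with h
    · subst h; simp
    · have : ∃ i, e i ≠ 0 := by
        by_contra! hc
        exact h (by ext i; simp [hc i])
      obtain ⟨i, hi⟩ := this
      symm
      apply prod_eq_zero (i := i)
      · rw [mem_range]; by_contra hc; exact hi (he i (by omega))
      · obtain ⟨m, hm⟩ := Nat.exists_eq_succ_of_ne_zero hi
        simp [hm]
  | insert o S ho ih =>
    have ih := ih (fun o' ho' => hS o' (mem_insert_of_mem ho'))
    have hins : ∀ B ⊆ S, typ (insert o B) = typ B + Finsupp.single (o.card - 1) 1 := by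
      intro B hB
      rw [typ, sum_insert (fun h => ho (hB h)), typ, add_comm]
    rw [sum_powerset_insert ho, ih e he, hins S le_rfl, pascal _ _ _ _ (hS o (mem_insert_self _ _))]
    congr 1
    split_ifs with h0
    · apply sum_eq_zero
      intro B hB
      rw [hins B (mem_powerset.1 hB), if_neg]
      intro h
      rw [← h] at h0
      simp at h0
    · rw [← ih]
      · refine sum_congr rfl fun B hB => ?_
        rw [hins B (mem_powerset.1 hB)]
        congr 1
        have hle : Finsupp.single (o.card - 1) 1 ≤ e := by
          rw [Finsupp.single_le_iff]; omega
        rw [eq_iff_iff]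
        constructor
        · intro h; rw [← h]; simp
        · intro h; rw [h]; exact tsub_add_cancel_of_le hle
      · intro i hi
        simp [he i hi]

end Orb

lemma partFactorial_eq (d : ℕ →₀ ℕ) (N : ℕ) (h : ∀ i, N ≤ i → d i = 0) :
    partFactorial d = ∏ i ∈ Finset.range N, ((d i).factorial : ℚ) := by
  unfold partFactorial
  apply Finset.prod_subset
  · intro i hi
    rw [Finset.mem_range]
    by_contra hc
    exact (Finsupp.mem_support_iff.1 hi) (h i (by omega))
  · intro i _ hi
    simp [Finsupp.notMem_support_iff.1 hi]

lemma partFactorial_ne (d : ℕ →₀ ℕ) : partFactorial d ≠ 0 := by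
  unfold partFactorial
  apply Finset.prod_ne_zero_iff.2
  intro i _
  exact_mod_cast (Nat.factorial_ne_zero _)

lemma coeff_expTzero (d : ℕ →₀ ℕ) : MvPowerSeries.coeff d expTzero = (partFactorial d)⁻¹ := by
  change expTzero d = _
  simp [expTzero, partFactorial]

lemma coeff_count {α : Type} [Fintype α] [DecidableEq α] (S : Finset (Finset α)) (e : ℕ →₀ ℕ) (a : ℚ) :
    partFactorial (Orb.typ S) * MvPowerSeries.coeff (Orb.typ S)
      (MvPowerSeries.monomial e (a / partFactorial e) * expTzero) =
    ∑ B ∈ S.powerset, (if Orb.typ B = e then a else 0) := by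
  obtain ⟨N, hN⟩ : ∃ N, ∀ i, N ≤ i → e i = 0 := by
    refine ⟨e.support.sup id + 1, fun i hi => ?_⟩
    by_contra hc
    have := Finset.le_sup (f := id) (Finsupp.mem_support_iff.2 hc)
    simp at this; omega
  let N' := N + (S.sup Finset.card + 1)
  have hS : ∀ o ∈ S, o.card - 1 < N' := by
    intro o ho
    have := Finset.le_sup (f := Finset.card) ho
    omega
  have he : ∀ i, N' ≤ i → e i = 0 := fun i hi => hN i (by omega)
  have ht : ∀ i, N' ≤ i → Orb.typ S i = 0 := by
    intro i hi
    rw [Orb.typ, Finsupp.finsetSum_apply]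
    apply Finset.sum_eq_zero
    intro o ho
    have := hS o ho
    rw [Finsupp.single_apply, if_neg (by omega)]
  have h1 : ∑ B ∈ S.powerset, (if Orb.typ B = e then a else 0) =
      a * ((∑ B ∈ S.powerset, (if Orb.typ B = e then 1 else 0) : ℕ) : ℚ) := by
    push_cast
    rw [Finset.mul_sum]
    refine Finset.sum_congr rfl fun B _ => ?_
    split_ifs <;> simp
  rw [h1, Orb.count_typ N' S hS e he, MvPowerSeries.coeff_monomial_mul]
  split_ifs with hle
  · rw [coeff_expTzero, partFactorial_eq _ N' ht, partFactorial_eq _ N' he,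
      partFactorial_eq (Orb.typ S - e) N' (fun i hi => by simp [ht i hi])]
    have : ∏ i ∈ Finset.range N', ((Orb.typ S i).factorial : ℚ) =
        (∏ i ∈ Finset.range N', ((Orb.typ S i).choose (e i) : ℚ)) *
        (∏ i ∈ Finset.range N', ((e i).factorial : ℚ)) *
        (∏ i ∈ Finset.range N', (((Orb.typ S - e) i).factorial : ℚ)) := by
      rw [← Finset.prod_mul_distrib, ← Finset.prod_mul_distrib]
      refine Finset.prod_congr rfl fun i _ => ?_
      rw [Finsupp.tsub_apply]
      exact_mod_cast (Nat.choose_mul_factorial_mul_factorial (hle i)).symm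
    rw [this]
    have n1 : ∏ i ∈ Finset.range N', ((e i).factorial : ℚ) ≠ 0 :=
      Finset.prod_ne_zero_iff.2 fun i _ => by exact_mod_cast (Nat.factorial_ne_zero _)
    have n2 : ∏ i ∈ Finset.range N', (((Orb.typ S - e) i).factorial : ℚ) ≠ 0 :=
      Finset.prod_ne_zero_iff.2 fun i _ => by exact_mod_cast (Nat.factorial_ne_zero _)
    push_cast
    field_simp
  · have : ∃ i, Orb.typ S i < e i := by
      by_contra! hc
      exact hle hc
    obtain ⟨i, hi⟩ := this
    have : ∏ i ∈ Finset.range N', (Orb.typ S i).choose (e i) = 0 := by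
      apply Finset.prod_eq_zero (i := i)
      · rw [Finset.mem_range]; by_contra hc
        rw [he i (by omega)] at hi; omega
      · exact Nat.choose_eq_zero_of_lt hi
    rw [this]; simp

namespace FM
open Finset

lemma ch_equiv (M : FM) {α β : Type} [Finite α] [Finite β] (σ : Equiv.Perm α) (τ : Equiv.Perm β)
    (f : β ≃ α) (h : ∀ b, f (τ b) = σ (f b)) : M.ch τ = M.ch σ := by
  refine trace_intertwine (M.mpE f) _ _ fun x => ?_
  rw [mpE_apply, mpE_apply, M.mp_mp, M.mp_mp]
  congr 2
  ext b
  exact h b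

lemma parts_of_ty {α β : Type} [Fintype α] [DecidableEq α] [Fintype β] [DecidableEq β]
    {σ : Equiv.Perm α} {τ : Equiv.Perm β} (h : ty σ = ty τ) :
    σ.partition.parts = τ.partition.parts := by
  ext n
  cases n with
  | zero =>
    rw [Multiset.count_eq_zero_of_notMem, Multiset.count_eq_zero_of_notMem]
    · intro h0; exact absurd (τ.partition.parts_pos h0) (by simp)
    · intro h0; exact absurd (σ.partition.parts_pos h0) (by simp)
  | succ i =>
    rw [← partMonomial_apply, ← partMonomial_apply]
    exact DFunLike.congr_fun h i

lemma card_of_ty {α β : Type} [Fintype α] [DecidableEq α] [Fintype β] [DecidableEq β]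
    {σ : Equiv.Perm α} {τ : Equiv.Perm β} (h : ty σ = ty τ) : Fintype.card α = Fintype.card β := by
  rw [← σ.partition.parts_sum, ← τ.partition.parts_sum, parts_of_ty h]

lemma ch_class (M : FM) {α β : Type} [Fintype α] [DecidableEq α] [Fintype β] [DecidableEq β]
    {σ : Equiv.Perm α} {τ : Equiv.Perm β} (h : ty σ = ty τ) : M.ch σ = M.ch τ := by
  let e : α ≃ β := Fintype.equivOfCardEq (card_of_ty h)
  have h1 : ∀ b, e (σ b) = e.permCongr σ (e b) := fun b => by simp [Equiv.permCongr_apply]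
  rw [M.ch_equiv (e.permCongr σ) σ e h1]
  rw [Orb.ty_equiv (e.permCongr σ) σ e h1] at h
  have h2 : IsConj (e.permCongr σ) τ := by
    rw [Equiv.Perm.partition_eq_of_isConj]
    exact Nat.Partition.ext (parts_of_ty h)
  obtain ⟨c, hc⟩ := isConj_iff.1 h2
  refine M.ch_equiv _ _ c fun b => ?_
  rw [← hc]; simp

lemma ch_rat (M : FM) {α : Type} [Fintype α] [DecidableEq α] (σ : Equiv.Perm α) :
    ∃ c : ℚ, M.ch σ = algebraMap ℚ ℂ c := by
  have hp : ∀ k : ℕ, (M.mp σ.toEmbedding : Module.End ℂ (M.V α)) ^ k = M.mp (σ ^ k).toEmbedding := by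
    intro k
    induction k with
    | zero => ext x; rw [pow_zero]; exact (M.mp_id' _ (fun a => rfl) x).symm
    | succ k ih =>
      ext x
      rw [pow_succ, ih, Module.End.mul_apply, M.mp_mp]
      congr 2
  refine trace_rational (M.mp σ.toEmbedding) (orderOf σ) (orderOf_pos σ) ?_ ?_
  · rw [hp, pow_orderOf_eq_one]
    ext x
    exact M.mp_id' _ (fun a => rfl) x
  · intro k hk
    rw [hp]
    have : IsConj (σ ^ k) σ := Equiv.Perm.isConj_of_cycleType_eq (cycleType_pow_coprime σ k hk)
    obtain ⟨c, hc⟩ := isConj_iff.1 this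
    refine M.ch_equiv _ _ c fun b => ?_
    conv_rhs => rw [← hc]
    simp

lemma exists_val (M : FM) : ∃ f : (ℕ →₀ ℕ) → ℚ, ∀ (α : Type) [Fintype α] [DecidableEq α]
    (σ : Equiv.Perm α), M.ch σ = algebraMap ℚ ℂ (f (ty σ)) := by
  classical
  have : ∀ e : ℕ →₀ ℕ, ∃ c : ℚ, ∀ (α : Type) [Fintype α] [DecidableEq α]
      (σ : Equiv.Perm α), ty σ = e → M.ch σ = algebraMap ℚ ℂ c := by
    intro e
    by_cases h : ∃ (n : ℕ) (τ : Equiv.Perm (Fin n)), ty τ = e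
    · obtain ⟨n, τ, rfl⟩ := h
      obtain ⟨c, hc⟩ := M.ch_rat τ
      exact ⟨c, fun α _ _ σ hσ => by rw [M.ch_class hσ, hc]⟩
    · refine ⟨0, fun α _ _ σ hσ => ?_⟩
      exfalso
      apply h
      let e : α ≃ Fin (Fintype.card α) := Fintype.equivFin α
      refine ⟨_, e.permCongr σ, ?_⟩
      rw [← Orb.ty_equiv (e.permCongr σ) σ e (fun b => by simp [Equiv.permCongr_apply]), hσ]
  choose f hf using this
  exact ⟨f, fun α _ _ σ => hf _ α σ rfl⟩

noncomputable def SS (r : ℕ) : Finset (ℕ →₀ ℕ) :=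
  (range r).biUnion fun n => (univ : Finset (Equiv.Perm (Fin n))).image (fun σ => ty σ)

lemma ty_mem_SS {r : ℕ} {α : Type} [Fintype α] [DecidableEq α] (σ : Equiv.Perm α) :
    ty σ ∈ SS r ↔ Fintype.card α < r := by
  simp only [SS, mem_biUnion, mem_range, mem_image, mem_univ, true_and]
  constructor
  · rintro ⟨n, hn, τ, h⟩
    have := card_of_ty h
    simp at this
    omega
  · intro h
    let e : α ≃ Fin (Fintype.card α) := Fintype.equivFin α
    refine ⟨_, h, e.permCongr σ, ?_⟩
    rw [← Orb.ty_equiv (e.permCongr σ) σ e (fun b => by simp [Equiv.permCongr_apply])]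

noncomputable def ser (p q : MvPolynomial ℕ ℚ) : MvPowerSeries ℕ ℚ :=
  (p : MvPowerSeries ℕ ℚ) * expTzero + (q : MvPowerSeries ℕ ℚ)

def PQ (r : ℕ) (M : FM) (p q : MvPolynomial ℕ ℚ) : Prop :=
  ∀ (α : Type) [Fintype α] [DecidableEq α] (σ : Equiv.Perm α), r ≤ Fintype.card α →
    M.ch σ = algebraMap ℚ ℂ (partFactorial (ty σ) * MvPowerSeries.coeff (ty σ) (ser p q))

lemma PQ.ev {r : ℕ} {M : FM} {p q : MvPolynomial ℕ ℚ} (h : PQ r M p q) :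
    ∃ p q, PQ 0 M p q := by
  obtain ⟨f, hf⟩ := M.exists_val
  let q' : MvPolynomial ℕ ℚ := ∑ e ∈ SS r, MvPolynomial.monomial e
    (f e / partFactorial e - MvPowerSeries.coeff e (ser p q))
  refine ⟨p, q + q', ?_⟩
  intro α _ _ σ _
  have hs : ser p (q + q') = ser p q + (q' : MvPowerSeries ℕ ℚ) := by
    simp [ser, add_assoc]
  have hq' : MvPowerSeries.coeff (ty σ) (q' : MvPowerSeries ℕ ℚ) =
      if ty σ ∈ SS r then (f (ty σ) / partFactorial (ty σ) - MvPowerSeries.coeff (ty σ) (ser p q))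
      else 0 := by
    rw [MvPolynomial.coeff_coe, MvPolynomial.coeff_sum]
    simp only [MvPolynomial.coeff_monomial]
    rw [Finset.sum_ite_eq']
  rw [hs, map_add, hq']
  split_ifs with hm
  · rw [hf]
    congr 1
    have := partFactorial_ne (ty σ)
    field_simp
    ring
  · rw [ty_mem_SS] at hm
    rw [add_zero]
    exact h α σ (by omega)

lemma ch_sh (M : FM) {α : Type} [Finite α] (h : Function.Injective (M.mp (so α)))
    (σ : Equiv.Perm α) : M.Sh.ch σ = M.ch σ + M.D.ch σ := by
  refine trace_exact (V := M.V (Option α)) (U := M.V α) (Q := M.D.V α) (M.mp (so α)) (M.dq α) h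
    (M.dq_surj α) (M.ker_dq α) (M.mp σ.toEmbedding.optionMap) _ _ ?_ ?_
  · intro x
    rw [M.mp_mp, M.mp_mp]
    congr 2
  · intro x
    rw [dq_mp]

theorem Good.hasPQ_zero {k : ℕ} {M : FM} (h : Good k 0 M) : ∃ p q, PQ 0 M p q := by
  obtain ⟨f, hf⟩ := M.H0.exists_val
  refine ⟨∑ e ∈ SS k, MvPolynomial.monomial e (f e / partFactorial e), 0, ?_⟩
  intro α _ _ σ _
  have h0 : ∀ (A : Finset α) (hA : ∀ x, σ x ∈ A ↔ x ∈ A), k ≤ A.card →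
      M.H0.ch (σ.subtypePerm hA) = 0 := by
    intro A hA hk
    have h1 := h.h0_zero hk
    rw [M.H0.finrank_congr (β := {x // x ∈ A}) (by simp)] at h1
    have : Subsingleton (M.H0.V {x // x ∈ A}) := Module.finrank_zero_iff.1 h1
    unfold ch
    rw [Subsingleton.elim (M.H0.mp (σ.subtypePerm hA).toEmbedding) 0, map_zero]
  have hch : M.ch σ = algebraMap ℚ ℂ (∑ B ∈ (Orb.E σ).powerset,
      if Orb.typ B ∈ SS k then f (Orb.typ B) else 0) := by
    rw [h.ch_decomp σ, map_sum]
    have hsum := Orb.sum_inv σ (fun A => algebraMap ℚ ℂ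
      (if Orb.typ ((Orb.E σ).filter (fun o => o ⊆ A)) ∈ SS k then
        f (Orb.typ ((Orb.E σ).filter (fun o => o ⊆ A))) else 0))
    have hR : ∑ B ∈ (Orb.E σ).powerset, algebraMap ℚ ℂ
        (if Orb.typ B ∈ SS k then f (Orb.typ B) else 0) = ∑ B ∈ (Orb.E σ).powerset,
        algebraMap ℚ ℂ (if Orb.typ ((Orb.E σ).filter (fun o => o ⊆ B.biUnion id)) ∈ SS k then
        f (Orb.typ ((Orb.E σ).filter (fun o => o ⊆ B.biUnion id))) else 0) := by
      refine sum_congr rfl fun B hB => ?_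
      rw [Orb.E_filter σ B (mem_powerset.1 hB)]
    rw [hR, ← hsum, sum_filter]
    refine sum_congr rfl fun A _ => ?_
    by_cases hA : ∀ x, σ x ∈ A ↔ x ∈ A
    · rw [dif_pos hA, if_pos hA, ← Orb.ty_sub σ A hA, hf]
      by_cases hk : ty (σ.subtypePerm hA) ∈ SS k
      · rw [if_pos hk]
      · rw [if_neg hk, ← hf, map_zero]
        rw [ty_mem_SS, Fintype.card_coe] at hk
        exact h0 A hA (by omega)
    · rw [dif_neg hA, if_neg hA]
  rw [hch]
  congr 1
  have hser : ser (∑ e ∈ SS k, MvPolynomial.monomial e (f e / partFactorial e)) 0 =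
      ∑ e ∈ SS k, MvPowerSeries.monomial e (f e / partFactorial e) * expTzero := by
    rw [ser, MvPolynomial.coe_zero, add_zero, ← Finset.sum_mul]
    congr 1
    change MvPolynomial.coeToMvPowerSeries.ringHom _ = _
    rw [map_sum]
    refine sum_congr rfl fun e _ => ?_
    exact MvPolynomial.coe_monomial _ _
  rw [hser, map_sum, mul_sum, Orb.ty_eq]
  simp only [coeff_count]
  rw [sum_comm]
  refine sum_congr rfl fun B _ => ?_
  rw [Finset.sum_ite_eq]

theorem Good.hasPQ {k r : ℕ} {M : FM} (h : Good k r M) : ∃ p q, PQ 0 M p q := by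
  induction k generalizing r M with
  | zero =>
    have : PQ r M 0 0 := by
      intro α _ _ σ hr
      have : Subsingleton (M.V α) := h α (by simpa using hr)
      unfold ch
      rw [Subsingleton.elim (M.mp σ.toEmbedding) 0, map_zero]
      simp [ser]
    exact this.ev
  | succ k ihk =>
    induction r generalizing M with
    | zero => exact h.hasPQ_zero
    | succ r ihr =>
      obtain ⟨p1, q1, h1⟩ := ihr h.sh
      obtain ⟨p2, q2, h2⟩ := ihk h.2
      have : PQ (r + 1) M (p1 - p2) (q1 - q2) := by
        intro α _ _ σ hr
        have h3 := M.ch_sh (h.1 α (by simpa using hr)) σ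
        rw [h1 α σ (Nat.zero_le _), h2 α σ (Nat.zero_le _)] at h3
        have hs : ser (p1 - p2) (q1 - q2) = ser p1 q1 - ser p2 q2 := by
          have e1 : ((p1 - p2 : MvPolynomial ℕ ℚ) : MvPowerSeries ℕ ℚ) = p1 - p2 :=
            map_sub (MvPolynomial.coeToMvPowerSeries.ringHom) p1 p2
          have e2 : ((q1 - q2 : MvPolynomial ℕ ℚ) : MvPowerSeries ℕ ℚ) = q1 - q2 :=
            map_sub (MvPolynomial.coeToMvPowerSeries.ringHom) q1 q2
          rw [ser, ser, ser, e1, e2]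
          ring
        rw [hs, map_sub, mul_sub, map_sub, h3]
        ring
      exact this.ev

end FM


open FM in
lemma exists_ty (e : ℕ →₀ ℕ) : ∃ (n : ℕ) (σ : Equiv.Perm (Fin n)), ty σ = e := by
  classical
  let s : Multiset ℕ := (Finsupp.toMultiset e).map Nat.succ
  have hs : s = s.filter (fun n => 2 ≤ n) + Multiset.replicate (s.count 1) 1 := by
    conv_lhs => rw [← Multiset.filter_add_not (fun n => 2 ≤ n) s]
    congr 1
    rw [← Multiset.filter_eq']
    apply Multiset.filter_congr
    intro x hx
    obtain ⟨y, -, rfl⟩ := Multiset.mem_map.1 hx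
    simp only [Nat.succ_eq_add_one]
    omega
  have hsum : s.sum = (s.filter (fun n => 2 ≤ n)).sum + s.count 1 := by
    conv_lhs => rw [hs]
    rw [Multiset.sum_add, Multiset.sum_replicate]
    simp
  obtain ⟨σ, hσ⟩ := (Equiv.Perm.exists_with_cycleType_iff (Fin s.sum)
    (m := s.filter (fun n => 2 ≤ n))).2 ⟨by rw [Fintype.card_fin]; omega, fun a ha => (Multiset.mem_filter.1 ha).2⟩
  refine ⟨_, σ, ?_⟩
  have hp : σ.partition.parts = s := by
    rw [Equiv.Perm.parts_partition, ← Equiv.Perm.sum_cycleType, hσ, Fintype.card_fin]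
    conv_rhs => rw [hs]
    congr 2
    omega
  ext i
  rw [partMonomial_apply, hp]
  have := Multiset.count_map_eq_count' Nat.succ (Finsupp.toMultiset e) Nat.succ_injective i
  rw [Finsupp.count_toMultiset] at this
  exact this

lemma partFactorial_add_single (u : ℕ →₀ ℕ) (j : ℕ) (h : u j = 0) :
    partFactorial (u + Finsupp.single j 1) = partFactorial u := by
  let v := u + Finsupp.single j 1
  obtain ⟨N, hN⟩ : ∃ N, ∀ i, N ≤ i → v i = 0 := by
    refine ⟨v.support.sup id + 1, fun i hi => ?_⟩
    by_contra hc
    have := Finset.le_sup (f := id) (Finsupp.mem_support_iff.2 hc)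
    simp only [id] at this; omega
  rw [partFactorial_eq v N hN, partFactorial_eq u N (fun i hi => by
    have := hN i hi
    simp [v] at this
    exact this.1)]
  refine Finset.prod_congr rfl fun i _ => ?_
  by_cases hi : i = j
  · subst hi; simp [v, h]
  · simp [v, Finsupp.single_apply, Ne.symm hi]

lemma coeff_shift (P : MvPolynomial ℕ ℚ) (j : ℕ) (hP : ∀ d ∈ P.support, d j = 0) (e : ℕ →₀ ℕ)
    (he : e j = 0) : MvPowerSeries.coeff (e + Finsupp.single j 1) ((P : MvPowerSeries ℕ ℚ) * expTzero) =
      MvPowerSeries.coeff e ((P : MvPowerSeries ℕ ℚ) * expTzero) := by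
  have hPs : (P : MvPowerSeries ℕ ℚ) = ∑ d ∈ P.support, MvPowerSeries.monomial d (P.coeff d) := by
    conv_lhs => rw [P.as_sum]
    change MvPolynomial.coeToMvPowerSeries.ringHom _ = _
    rw [map_sum]
    refine Finset.sum_congr rfl fun e _ => ?_
    exact MvPolynomial.coe_monomial _ _
  rw [hPs, Finset.sum_mul, map_sum, map_sum]
  refine Finset.sum_congr rfl fun d hd => ?_
  have hdj := hP d hd
  rw [MvPowerSeries.coeff_monomial_mul, MvPowerSeries.coeff_monomial_mul]
  have hle : d ≤ e + Finsupp.single j 1 ↔ d ≤ e := by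
    constructor
    · intro h i
      by_cases hi : i = j
      · subst hi; omega
      · have := h i
        simpa [Finsupp.single_apply, Ne.symm hi] using this
    · intro h; exact h.trans (by simp)
  by_cases h : d ≤ e
  · rw [if_pos h, if_pos (hle.2 h), coeff_expTzero, coeff_expTzero, ← tsub_add_eq_add_tsub h,
      partFactorial_add_single]
    simp [he]
  · rw [if_neg h, if_neg (fun h' => h (hle.1 h'))]

lemma expTzero_ne : expTzero ≠ 0 := by
  intro h
  have := coeff_expTzero 0
  rw [h] at this
  simp [partFactorial] at this

lemma ser_eq_zero (P Q : MvPolynomial ℕ ℚ) (j : ℕ) (hP : ∀ d ∈ P.support, d j = 0)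
    (hQ : ∀ d ∈ Q.support, d j = 0) (h : FM.ser P Q = 0) : P = 0 ∧ Q = 0 := by
  have h1 : ∀ e : ℕ →₀ ℕ, e j ≠ 0 → MvPowerSeries.coeff e ((P : MvPowerSeries ℕ ℚ) * expTzero) = 0 := by
    intro e he
    have h2 : MvPowerSeries.coeff e (FM.ser P Q) = 0 := by rw [h]; simp
    have h3 : Q.coeff e = 0 := by
      by_contra hc
      exact he (hQ e (MvPolynomial.mem_support_iff.2 hc))
    rw [FM.ser, map_add, MvPolynomial.coeff_coe, h3, add_zero] at h2
    exact h2
  have h2 : (P : MvPowerSeries ℕ ℚ) * expTzero = 0 := by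
    ext e
    rw [map_zero]
    by_cases he : e j = 0
    · rw [← coeff_shift P j hP e he]
      exact h1 _ (by simp)
    · exact h1 e he
  have h3 : (P : MvPowerSeries ℕ ℚ) = 0 := (mul_eq_zero.1 h2).resolve_right expTzero_ne
  have h4 : (Q : MvPowerSeries ℕ ℚ) = 0 := by
    rw [FM.ser, h2, zero_add] at h; exact h
  exact ⟨MvPolynomial.coe_injective ℕ ℚ (by rw [h3, MvPolynomial.coe_zero]),
    MvPolynomial.coe_injective ℕ ℚ (by rw [h4, MvPolynomial.coe_zero])⟩

lemma rename_supp (n : ℕ) (p : MvPolynomial (Fin n) ℚ) :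
    ∀ d ∈ (MvPolynomial.rename Fin.val p : MvPolynomial ℕ ℚ).support, d n = 0 := by
  intro d hd
  rw [MvPolynomial.mem_support_iff] at hd
  obtain ⟨u, hu, -⟩ := MvPolynomial.coeff_rename_ne_zero _ _ _ hd
  rw [← hu]
  apply Finsupp.mapDomain_of_notMem_range
  rintro ⟨i, hi⟩
  omega

lemma pair_unique (M : FIMod) (n : ℕ) (p q p' q' : MvPolynomial (Fin n) ℚ)
    (h : IsEnhancedHilbertPair M n p q) (h' : IsEnhancedHilbertPair M n p' q') :
    p' = p ∧ q' = q := by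
  let P := MvPolynomial.rename Fin.val (p' - p)
  let Q := MvPolynomial.rename Fin.val (q' - q)
  have key : FM.ser P Q = 0 := by
    have hs : FM.ser P Q = FM.ser (MvPolynomial.rename Fin.val p') (MvPolynomial.rename Fin.val q') -
        FM.ser (MvPolynomial.rename Fin.val p) (MvPolynomial.rename Fin.val q) := by
      have e1 : (P : MvPowerSeries ℕ ℚ) = (MvPolynomial.rename Fin.val p' : MvPolynomial ℕ ℚ) -
          (MvPolynomial.rename Fin.val p : MvPolynomial ℕ ℚ) := by
        have e0 : P = MvPolynomial.rename Fin.val p' - MvPolynomial.rename Fin.val p := map_sub _ _ _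
        rw [e0]
        exact map_sub (MvPolynomial.coeToMvPowerSeries.ringHom (σ := ℕ) (R := ℚ)) _ _
      have e2 : (Q : MvPowerSeries ℕ ℚ) = (MvPolynomial.rename Fin.val q' : MvPolynomial ℕ ℚ) -
          (MvPolynomial.rename Fin.val q : MvPolynomial ℕ ℚ) := by
        have e0 : Q = MvPolynomial.rename Fin.val q' - MvPolynomial.rename Fin.val q := map_sub _ _ _
        rw [e0]
        exact map_sub (MvPolynomial.coeToMvPowerSeries.ringHom (σ := ℕ) (R := ℚ)) _ _
      rw [FM.ser, FM.ser, FM.ser, e1, e2]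
      ring
    ext e
    obtain ⟨m, σ, rfl⟩ := exists_ty e
    have h1 := h m σ
    have h2 := h' m σ
    rw [h1] at h2
    have h3 := mul_left_cancel₀ (partFactorial_ne _) ((algebraMap ℚ ℂ).injective h2)
    rw [hs, map_sub, map_zero, sub_eq_zero]
    exact h3.symm
  obtain ⟨hP, hQ⟩ := ser_eq_zero P Q n (rename_supp n _) (rename_supp n _) key
  constructor
  · apply MvPolynomial.rename_injective Fin.val Fin.val_injective
    simpa [P, sub_eq_zero] using hP
  · apply MvPolynomial.rename_injective Fin.val Fin.val_injective
    simpa [Q, sub_eq_zero] using hQ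

/-! ## From FIMod to FM -/

instance homFinite (S T : FIObj) : Finite (S ⟶ T) :=
  inferInstanceAs (Finite {f : S.α → T.α // Function.Injective f})

def spanSub (M : FIMod) (k : ℕ) (S : Fin k → FIObj) (m : ∀ i, M.obj (S i)) : FISub M where
  carrier T := Submodule.span ℂ (Set.range fun z : (Σ i, (S i ⟶ T)) => M.map z.2 (m z.1))
  map_mem {T U} f x hx := by
    have : Submodule.span ℂ (Set.range fun z : (Σ i, (S i ⟶ T)) => M.map z.2 (m z.1)) ≤
        (Submodule.span ℂ (Set.range fun z : (Σ i, (S i ⟶ U)) => M.map z.2 (m z.1))).comap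
          (M.map f).hom := by
      rw [Submodule.span_le]
      rintro _ ⟨⟨i, g⟩, rfl⟩
      refine Submodule.subset_span ⟨⟨i, g ≫ f⟩, ?_⟩
      simp
    exact this hx

lemma spanSub_mem (M : FIMod) (k : ℕ) (S : Fin k → FIObj) (m : ∀ i, M.obj (S i)) (i : Fin k) :
    m i ∈ (spanSub M k S m).carrier (S i) := by
  refine Submodule.subset_span ⟨⟨i, 𝟙 _⟩, ?_⟩
  simp

lemma FG_fd (M : FIMod) (hM : FIMod.FG M) (T : FIObj) : FiniteDimensional ℂ (M.obj T) := by
  obtain ⟨k, S, m, h⟩ := hM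
  have := h (spanSub M k S m) (spanSub_mem M k S m) T
  exact ⟨⟨(Set.finite_range fun z : (Σ i, (S i ⟶ T)) => M.map z.2 (m z.1)).toFinset, by
    rw [Set.Finite.coe_toFinset]; exact this⟩⟩

noncomputable def fob (α : Type) [Finite α] : FIObj := ⟨α, Fintype.ofFinite α⟩

def fhom {S T : FIObj} (f : S.α ↪ T.α) : S ⟶ T := ⟨f, f.injective⟩

lemma map_comp_apply' (M : FIMod) {S T U : FIObj} (f : S ⟶ T) (g : T ⟶ U) (x : M.obj S) :
    (M.map (f ≫ g)).hom x = (M.map g).hom ((M.map f).hom x) := by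
  simp

noncomputable def toFM (M : FIMod) (hfd : ∀ T, FiniteDimensional ℂ (M.obj T)) : FM where
  V α _ := M.obj (fob α)
  acg _ _ := inferInstance
  mod _ _ := inferInstance
  fd _ _ := hfd _
  mp {α β} _ _ f := (M.map (fhom (S := fob α) (T := fob β) f)).hom
  mp_id {α} _ x := by
    have : fhom (S := fob α) (T := fob α) (Function.Embedding.refl α) = 𝟙 _ := rfl
    rw [this]; simp
  mp_mp {α β γ} _ _ _ f g x := by
    exact (map_comp_apply' M (fhom (S := fob α) (T := fob β) f)
      (fhom (S := fob β) (T := fob γ) g) x).symm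

lemma trace_inst (M : FIMod) (α : Type) (σ : Equiv.Perm α) (i j : Fintype α) :
    LinearMap.trace ℂ (M.obj ⟨α, i⟩) (M.map (⟨σ, σ.injective⟩ : (⟨α, i⟩ : FIObj) ⟶ ⟨α, i⟩)).hom =
    LinearMap.trace ℂ (M.obj ⟨α, j⟩) (M.map (⟨σ, σ.injective⟩ : (⟨α, j⟩ : FIObj) ⟶ ⟨α, j⟩)).hom := by
  have : i = j := Subsingleton.elim _ _
  subst this
  rfl

lemma toFM_ch (M : FIMod) (hfd) (n : ℕ) (σ : Equiv.Perm (Fin n)) :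
    traceOfPerm M n σ = (toFM M hfd).ch σ :=
  trace_inst M (Fin n) σ _ _

lemma toFM_gen (M : FIMod) (hM : FIMod.FG M) (hfd) : ∃ d, FM.Gen d (toFM M hfd) := by
  obtain ⟨k, S, m, h⟩ := hM
  refine ⟨Finset.univ.sup (fun i => Nat.card (S i).α) + 1, ?_⟩
  intro β _
  have h1 := h (spanSub M k S m) (spanSub_mem M k S m) (fob β)
  have h2 : (⊤ : Submodule ℂ (M.obj (fob β))) ≤
      Submodule.span ℂ (Set.range fun z : (Σ i, (S i ⟶ fob β)) => M.map z.2 (m z.1)) := h1.ge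
  refine le_trans h2 (Submodule.span_le.2 ?_)
  rintro _ ⟨⟨i, f⟩, rfl⟩
  let s : Set β := Set.range (f.1 : (S i).α → β)
  have hs : Nat.card s < Finset.univ.sup (fun i => Nat.card (S i).α) + 1 := by
    have e : Nat.card s = Nat.card (S i).α := by
      exact (Nat.card_congr (Equiv.ofInjective f.1 f.2)).symm
    have := Finset.le_sup (f := fun i => Nat.card (S i).α) (Finset.mem_univ i)
    omega
  refine Submodule.mem_iSup_of_mem (p := fun s : {s : Set β // Nat.card s <
    Finset.univ.sup (fun i => Nat.card (S i).α) + 1} =>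
      LinearMap.range ((toFM M hfd).mp (FM.inc s.1))) ⟨s, hs⟩ ?_
  let g : S i ⟶ fob s := ⟨fun a => (⟨f.1 a, a, rfl⟩ : s), fun a b hab =>
    f.2 (congrArg (fun z : s => z.1) hab)⟩
  refine ⟨M.map g (m i), ?_⟩
  have : f = g ≫ fhom (S := fob s) (T := fob β) (FM.inc s) := rfl
  change M.map (fhom (S := fob s) (T := fob β) (FM.inc s)) (M.map g (m i)) = M.map f (m i)
  conv_rhs => rw [this]
  simp

/-- The enhanced Hilbert series of a finitely generated FI-module is
rational: `H̃_M = p·exp(T₀) + q` for unique polynomials p, q in finitely many of the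
variables. -/
theorem fg_FIMod_enhanced_hilbert_series (M : FIMod) (hM : FIMod.FG M) :
    ∃ (n₀ : ℕ) (p q : MvPolynomial (Fin n₀) ℚ),
      IsEnhancedHilbertPair M n₀ p q ∧
        ∀ p' q' : MvPolynomial (Fin n₀) ℚ,
          IsEnhancedHilbertPair M n₀ p' q' → p' = p ∧ q' = q := by
  have hfd := FG_fd M hM
  obtain ⟨d, hd⟩ := toFM_gen M hM hfd
  obtain ⟨r, hr⟩ := hd.good
  obtain ⟨P, Q, h⟩ := hr.hasPQ
  let n₀ : ℕ := (P.vars ∪ Q.vars).sup id + 1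
  have hlt : ∀ i ∈ P.vars ∪ Q.vars, i < n₀ := by
    intro i hi
    have := Finset.le_sup (f := id) hi
    simp only [id] at this
    omega
  obtain ⟨p, hp⟩ := MvPolynomial.exists_rename_eq_of_vars_subset_range P (Fin.val : Fin n₀ → ℕ)
    Fin.val_injective (fun i hi => ⟨⟨i, hlt i (Finset.mem_union_left _ hi)⟩, rfl⟩)
  obtain ⟨q, hq⟩ := MvPolynomial.exists_rename_eq_of_vars_subset_range Q (Fin.val : Fin n₀ → ℕ)
    Fin.val_injective (fun i hi => ⟨⟨i, hlt i (Finset.mem_union_right _ hi)⟩, rfl⟩)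
  have hpq : IsEnhancedHilbertPair M n₀ p q := by
    intro n σ
    rw [toFM_ch M hfd n σ, hp, hq]
    exact h (Fin n) σ (Nat.zero_le _)
  exact ⟨n₀, p, q, hpq, fun p' q' h' => pair_unique M n₀ p q p' q' hpq h'⟩
end

section
/- Let 𝒜 and ℬ be abelian categories with enough injectives, and suppose that the full subcategory of injective objects of 𝒜 is equivalent to the full subcategory of injective objects of ℬ. Then 𝒜 and ℬ are equivalent categories. -/
open CategoryTheory

universe v₁ v₂ u₁ u₂

namespace InjLift

open Limits

variable {A : Type u₁} [Category.{v₁} A] [Abelian A]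

lemma exists_factor {X Y J : A} [Injective J] (d : X ⟶ Y) (g : X ⟶ J)
    (hg : kernel.ι d ≫ g = 0) : ∃ h : Y ⟶ J, d ≫ h = g := by
  let c : Abelian.coimage d ⟶ J := cokernel.desc _ g hg
  let k : Y ⟶ J := Injective.factorThru c (Abelian.factorThruCoimage d)
  have hk : Abelian.factorThruCoimage d ≫ k = c := Injective.comp_factorThru _ _
  refine ⟨k, ?_⟩
  have h1 : Abelian.coimage.π d ≫ c = g := cokernel.π_desc _ _ _
  rw [← h1, ← hk, ← Category.assoc, Abelian.coimage.fac]

/-- The underlying morphism. -/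
def dd (f : Arrow (InjectiveObject A)) : f.left.obj ⟶ f.right.obj := f.hom.hom

lemma dd_w {f g : Arrow (InjectiveObject A)} (φ : f ⟶ g) :
    dd f ≫ φ.right.hom = φ.left.hom ≫ dd g :=
  (congrArg (fun t => t.hom) (Arrow.w φ)).symm

variable (A) in
/-- The kernel functor on arrows between injectives. -/
noncomputable def K : Arrow (InjectiveObject A) ⥤ A where
  obj f := kernel (dd f)
  map {f g} φ := kernel.map (dd f) (dd g) φ.left.hom φ.right.hom (dd_w φ)
  map_id f := by
    apply (cancel_mono (kernel.ι (dd f))).1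
    simp
  map_comp {f g h} _ _ := by
    apply (cancel_mono (kernel.ι (dd h))).1
    simp

/-- The inclusion of the kernel. -/
noncomputable def ι (f : Arrow (InjectiveObject A)) : (K A).obj f ⟶ f.left.obj :=
  kernel.ι (dd f)

instance (f : Arrow (InjectiveObject A)) : Mono (ι f) :=
  inferInstanceAs (Mono (kernel.ι (dd f)))

lemma ι_dd (f : Arrow (InjectiveObject A)) : ι f ≫ dd f = 0 := kernel.condition _

lemma K_map_ι {f g : Arrow (InjectiveObject A)} (φ : f ⟶ g) :
    (K A).map φ ≫ ι g = ι f ≫ φ.left.hom :=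
  kernel.lift_ι _ _ _

lemma K_map_eq_iff {f g : Arrow (InjectiveObject A)} (φ ψ : f ⟶ g) :
    (K A).map φ = (K A).map ψ ↔ ∃ h : f.right ⟶ g.left, f.hom ≫ h = φ.left - ψ.left := by
  rw [← cancel_mono (ι g), K_map_ι, K_map_ι]
  constructor
  · intro h
    obtain ⟨k, hk⟩ := exists_factor (J := g.left.obj) (dd f) (φ.left.hom - ψ.left.hom)
      (by
        change ι f ≫ _ = 0
        rw [Preadditive.comp_sub, h, sub_self])
    exact ⟨ObjectProperty.homMk k, ObjectProperty.hom_ext _ hk⟩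
  · rintro ⟨h, hh⟩
    have : dd f ≫ h.hom = φ.left.hom - ψ.left.hom := congrArg (fun t => t.hom) hh
    rw [← sub_eq_zero, ← Preadditive.comp_sub, ← this, ← Category.assoc, ι_dd, zero_comp]

instance : (K A).Full where
  map_surjective {f g} u := by
    let f0 : f.left.obj ⟶ g.left.obj := Injective.factorThru (u ≫ ι g) (ι f)
    have h0 : ι f ≫ f0 = u ≫ ι g := Injective.comp_factorThru _ _
    obtain ⟨f1, h1⟩ := exists_factor (J := g.right.obj) (dd f) (f0 ≫ dd g)
      (by
        change ι f ≫ _ = 0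
        rw [← Category.assoc, h0, Category.assoc, ι_dd, comp_zero])
    refine ⟨Arrow.homMk (ObjectProperty.homMk f0) (ObjectProperty.homMk f1)
      (ObjectProperty.hom_ext _ h1.symm), ?_⟩
    rw [← cancel_mono (ι g), K_map_ι]
    exact h0

instance [EnoughInjectives A] : (K A).EssSurj where
  mem_essImage X := by
    let I0 : InjectiveObject A := ⟨Injective.under X, inferInstance⟩
    let I1 : InjectiveObject A :=
      ⟨Injective.under (cokernel (Injective.ι X)), inferInstance⟩
    let d : I0 ⟶ I1 := ObjectProperty.homMk
      (cokernel.π (Injective.ι X) ≫ Injective.ι (cokernel (Injective.ι X)))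
    refine ⟨Arrow.mk d, ⟨?_⟩⟩
    exact (kernelCompMono (cokernel.π (Injective.ι X)) (Injective.ι _)) ≪≫
      (IsLimit.conePointUniqueUpToIso (limit.isLimit _)
        (Abelian.monoIsKernelOfCokernel _ (colimit.isColimit _)))

lemma nonempty_equiv {D A B : Type*} [Category* D] [Category* A] [Category* B]
    (P : D ⥤ A) (Q : D ⥤ B) [P.Full] [P.EssSurj] [Q.Full] [Q.EssSurj]
    (h : ∀ (X Y : D) (f g : X ⟶ Y), P.map f = P.map g ↔ Q.map f = Q.map g) :
    Nonempty (A ≌ B) := by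
  have hr : P.homRel = Q.homRel := by
    funext X Y f g
    exact propext (h X Y f g)
  have e1 := (CategoryTheory.Quotient.lift P.homRel P (fun _ _ _ _ h => h)).asEquivalence
  have e2 := (CategoryTheory.Quotient.lift Q.homRel Q (fun _ _ _ _ h => h)).asEquivalence
  rw [hr] at e1
  exact ⟨e1.symm.trans e2⟩

end InjLift

/-- If two abelian categories with enough injectives have equivalent
full subcategories of injective objects, then the categories themselves are equivalent. -/
theorem equivalence_of_injectives_lifts
    {A : Type u₁} [Category.{v₁} A] {B : Type u₂} [Category.{v₂} B]
    [Abelian A] [Abelian B] [EnoughInjectives A] [EnoughInjectives B]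
    (e : ObjectProperty.FullSubcategory (fun X : A => Injective X) ≌
      ObjectProperty.FullSubcategory (fun X : B => Injective X)) :
    Nonempty (A ≌ B) := by
  let E : InjectiveObject A ≌ InjectiveObject B := e
  have : E.functor.Additive := Functor.additive_of_preserves_binary_products _
  have : E.functor.mapArrow.IsEquivalence := inferInstance
  refine InjLift.nonempty_equiv (InjLift.K A) (E.functor.mapArrow ⋙ InjLift.K B) ?_
  intro X Y f g
  rw [Functor.comp_map, Functor.comp_map, InjLift.K_map_eq_iff, InjLift.K_map_eq_iff]
  constructor
  · rintro ⟨h, hh⟩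
    refine ⟨E.functor.map h, ?_⟩
    have := congrArg E.functor.map hh
    rw [Functor.map_comp, Functor.map_sub] at this
    exact this
  · rintro ⟨h, hh⟩
    obtain ⟨k, rfl⟩ := E.functor.map_surjective h
    refine ⟨k, E.functor.map_injective ?_⟩
    rw [Functor.map_comp, Functor.map_sub]
    exact hh
end

section
/- Let R = ℂ[x_1, x_2, x_3, …] be the polynomial ring in countably infinitely many variables over ℂ, and let 𝔪 be the ideal generated by all the variables. Then for every i ≥ 0 the i-th local cohomology module H^i_𝔪(R) is zero; in particular the infinite polynomial ring has infinite depth. -/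
open CategoryTheory Limits

namespace LCVanish

variable {R : Type} [CommRing R]

lemma step (P : ChainComplex (ModuleCat.{0} R) ℕ) [∀ n, Projective (P.X n)]
    (M Q : ModuleCat.{0} R) (q : M ⟶ Q) [Epi q] (x : R)
    (hw : ∀ y : M, q (x • y) = 0)
    (hq : ∀ (Z : ModuleCat.{0} R) (v : Z ⟶ M), v ≫ q = 0 → ∃ l : Z ⟶ M, x • l = v)
    (hx : IsSMulRegular M x) (i : ℕ)
    (ih : ∀ j, i = j + 1 → ∀ f : P.X j ⟶ Q, P.d (j+1) j ≫ f = 0 →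
      ∃ (k : ℕ) (g : P.X k ⟶ Q), P.d j k ≫ g = f)
    (f : P.X i ⟶ M)
    (h : ∃ (j : ℕ) (g : P.X j ⟶ M), P.d i j ≫ g = x • f) :
    ∃ (j : ℕ) (g : P.X j ⟶ M), P.d i j ≫ g = f := by
  obtain ⟨j, g, hg⟩ := h
  have hf : (x • f) ≫ q = 0 := by
    ext y
    exact hw _
  have hinj : ∀ (Z : ModuleCat.{0} R) (a b : Z ⟶ M), x • a = x • b → a = b := by
    intro Z a b hab
    ext y
    exact hx (congrArg (fun t : Z ⟶ M => t y) hab)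
  by_cases hij : i = j + 1
  · subst hij
    obtain ⟨k, u, hu⟩ := ih j rfl (g ≫ q) (by rw [← Category.assoc, hg, hf])
    obtain ⟨l, hl⟩ := hq _ (g - P.d j k ≫ Projective.factorThru u q) (by
      rw [Preadditive.sub_comp, Category.assoc, Projective.factorThru_comp, hu, sub_self])
    refine ⟨j, l, hinj _ _ _ ?_⟩
    rw [← Linear.comp_smul, hl, Preadditive.comp_sub, HomologicalComplex.d_comp_d_assoc,
      zero_comp, sub_zero, hg]
  · refine ⟨j, 0, hinj _ _ _ ?_⟩
    rw [P.shape i j (by simpa using fun h => hij h.symm), zero_comp] at hg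
    rw [comp_zero, smul_zero, hg]

open Pointwise in
lemma step' (P : ChainComplex (ModuleCat.{0} R) ℕ) [∀ n, Projective (P.X n)]
    (M : ModuleCat.{0} R) (x : R) (hx : IsSMulRegular M x) (i : ℕ)
    (ih : ∀ j, i = j + 1 → ∀ f : P.X j ⟶ ModuleCat.of R (QuotSMulTop x M),
      P.d (j+1) j ≫ f = 0 →
      ∃ (k : ℕ) (g : P.X k ⟶ ModuleCat.of R (QuotSMulTop x M)), P.d j k ≫ g = f)
    (f : P.X i ⟶ M)
    (h : ∃ (j : ℕ) (g : P.X j ⟶ M), P.d i j ≫ g = x • f) :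
    ∃ (j : ℕ) (g : P.X j ⟶ M), P.d i j ≫ g = f := by
  have hS := hx.smulShortComplex_shortExact
  have hm := hS.mono_f
  have he : Epi (ModuleCat.ofHom (x • (⊤ : Submodule R M)).mkQ) := hS.epi_g
  refine step P M (ModuleCat.of R (QuotSMulTop x M))
    (ModuleCat.ofHom (x • (⊤ : Submodule R M)).mkQ) x ?_ ?_ hx i ih f h
  · intro y
    exact (LinearMap.exact_lsmul_mkQ_smul_top M x _).2 ⟨y, rfl⟩
  · intro Z v hv
    refine ⟨hS.exact.lift v hv, ?_⟩
    have := hS.exact.lift_f v hv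
    ext y
    exact congrArg (fun t : Z ⟶ M => t y) this

lemma null (P : ChainComplex (ModuleCat.{0} R) ℕ) (i : ℕ) (r : R)
    (H : Homotopy (r • 𝟙 P) 0) (M : ModuleCat.{0} R) (f : P.X i ⟶ M) (hf : P.d (i+1) i ≫ f = 0) :
    ∃ (j : ℕ) (g : P.X j ⟶ M), P.d i j ≫ g = r • f := by
  have h := H.comm i
  have e1 : dNext i H.hom = P.d i ((ComplexShape.down ℕ).next i) ≫ H.hom _ i := rfl
  have e2 : prevD i H.hom = H.hom i (i+1) ≫ P.d (i+1) i := prevD_eq _ (by simp)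
  rw [e1, e2] at h
  refine ⟨(ComplexShape.down ℕ).next i, H.hom _ i ≫ f, ?_⟩
  have := congrArg (· ≫ f) h
  simp [hf] at this
  simpa using this.symm

lemma key (P : ChainComplex (ModuleCat.{0} R) ℕ) [∀ n, Projective (P.X n)] (i : ℕ) :
    ∀ (rs : List R) (_ : i < rs.length)
    (_ : ∀ r ∈ rs, ∃ n : ℕ, Nonempty (Homotopy (r ^ n • 𝟙 P) 0))
    (M : ModuleCat.{0} R) (_ : RingTheory.Sequence.IsWeaklyRegular M rs)
    (f : P.X i ⟶ M), P.d (i+1) i ≫ f = 0 →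
      ∃ (k : ℕ) (g : P.X k ⟶ M), P.d i k ≫ g = f := by
  induction i with
  | zero => 
    intro rs hl hn M hM f hf
    obtain _ | ⟨r, rs⟩ := rs
    · simp at hl
    rw [RingTheory.Sequence.isWeaklyRegular_cons_iff] at hM
    obtain ⟨n, ⟨H⟩⟩ := hn r (by simp)
    have h0 : ∃ (j : ℕ) (g : P.X j ⟶ M), P.d 0 j ≫ g = r ^ n • f := by
      exact null P _ _ H M f hf
    clear H
    induction n with
    | zero => simpa using h0
    | succ n ihn =>
      apply ihn
      apply step' P M r hM.1 0 (fun j hj => by omega)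
      rwa [smul_smul, ← pow_succ']
  | succ i ih => 
    intro rs hl hn M hM f hf
    obtain _ | ⟨r, rs⟩ := rs
    · simp at hl
    rw [RingTheory.Sequence.isWeaklyRegular_cons_iff] at hM
    obtain ⟨n, ⟨H⟩⟩ := hn r (by simp)
    have h0 : ∃ (j : ℕ) (g : P.X j ⟶ M), P.d (i+1) j ≫ g = r ^ n • f := by
      exact null P _ _ H M f hf
    clear H
    induction n with
    | zero => simpa using h0
    | succ n ihn =>
      apply ihn
      apply step' P M r hM.1 (i+1) 
      · rintro j hj
        obtain rfl : i = j := by omega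
        exact ih rs (by simpa using hl) (fun r hr => hn r (by simp [hr])) _ hM.2
      rwa [smul_smul, ← pow_succ']

lemma ext_zero (N M : ModuleCat.{0} R) (i : ℕ) (rs : List R) (hl : i < rs.length)
    (hr : ∀ r ∈ rs, ∃ n : ℕ, ∀ y : N, r ^ n • y = 0)
    (hM : RingTheory.Sequence.IsWeaklyRegular M rs) :
    IsZero (((Ext R (ModuleCat.{0} R) i).obj (Opposite.op N)).obj M) := by
  let P := projectiveResolution N
  refine IsZero.of_iso ?_ (P.isoExt i M)
  rw [← HomologicalComplex.exactAt_iff_isZero_homology, HomologicalComplex.exactAt_iff,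
    ShortComplex.moduleCat_exact_iff]
  intro (f : P.complex.X i ⟶ M) hf
  have hn : (ComplexShape.up ℕ).next i = i + 1 := by simp
  have hf' : P.complex.d (i+1) i ≫ f = 0 := by
    rw [← hn]
    exact hf
  obtain ⟨k, g, hg⟩ := key P.complex i rs hl (by
    intro r hr'
    obtain ⟨n, hn⟩ := hr r hr'
    refine ⟨n, ⟨ProjectiveResolution.liftHomotopyZero _ ?_⟩⟩
    ext : 1
    simp only [HomologicalComplex.comp_f, HomologicalComplex.smul_f_apply,
      HomologicalComplex.id_f, Linear.smul_comp, Category.id_comp]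
    ext y
    exact hn _) M hM f hf'
  by_cases hk : (ComplexShape.up ℕ).Rel k i
  · obtain rfl : (ComplexShape.up ℕ).prev i = k := ComplexShape.prev_eq' _ hk
    exact ⟨g, hg⟩
  · refine ⟨0, ?_⟩
    rw [P.complex.shape i k (by simpa using hk), zero_comp] at hg
    rw [← hg, map_zero]
    rfl

lemma reg (n : ℕ) : RingTheory.Sequence.IsWeaklyRegular (MvPolynomial ℕ ℂ)
    ((List.range n).map (MvPolynomial.X : ℕ → MvPolynomial ℕ ℂ)) := by
  rw [RingTheory.Sequence.isWeaklyRegular_iff]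
  intro i hi
  simp only [List.length_map, List.length_range] at hi
  have hI : Ideal.ofList (((List.range n).map (MvPolynomial.X : ℕ → MvPolynomial ℕ ℂ)).take i) •
      (⊤ : Submodule (MvPolynomial ℕ ℂ) (MvPolynomial ℕ ℂ)) =
      Ideal.span (MvPolynomial.X '' {j | j < i}) := by
    rw [smul_eq_mul, Ideal.mul_top, ← List.map_take, List.take_range, min_eq_left hi.le]
    unfold Ideal.ofList
    congr 1
    ext p
    simp
  rw [hI, isSMulRegular_quotient_iff_mem_of_smul_mem]
  intro p hp
  simp only [List.getElem_map, List.getElem_range, smul_eq_mul] at hp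
  rw [MvPolynomial.mem_ideal_span_X_image] at hp ⊢
  intro m hm
  obtain ⟨j, hj, hj'⟩ := hp (m + Finsupp.single i 1) (by
    rw [MvPolynomial.mem_support_iff] at hm ⊢
    rwa [add_comm, MvPolynomial.coeff_X_mul])
  refine ⟨j, hj, ?_⟩
  have : j ≠ i := ne_of_lt hj
  simpa [Finsupp.single_apply, this.symm] using hj'

end LCVanish

/-- Let R = ℂ[x_1, x_2, x_3, …] be the polynomial ring in countably many
variables and 𝔪 the ideal generated by all the variables.  Then every local cohomology
module H^i_𝔪(R) (defined as colim_d Ext^i(R/𝔪^d, R)) vanishes; in particular R has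
infinite depth. -/
theorem localCohomology_of_infinite_polynomial_ring_vanishes (i : ℕ) :
    Subsingleton
      ((localCohomology
          (Ideal.span (Set.range (MvPolynomial.X : ℕ → MvPolynomial ℕ ℂ))) i).obj
        (ModuleCat.of (MvPolynomial ℕ ℂ) (MvPolynomial ℕ ℂ))) := by
  rw [← ModuleCat.isZero_iff_subsingleton]
  set J := Ideal.span (Set.range (MvPolynomial.X : ℕ → MvPolynomial ℕ ℂ)) with hJ
  set M := ModuleCat.of (MvPolynomial ℕ ℂ) (MvPolynomial ℕ ℂ)
  let D := localCohomology.diagram (localCohomology.idealPowersDiagram J) i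
  have hc := isColimitOfPreserves ((evaluation _ (ModuleCat.{0} (MvPolynomial ℕ ℂ))).obj M)
    (colimit.isColimit D)
  change IsZero ((colimit D).obj M)
  rw [IsZero.iff_id_eq_zero]
  apply hc.hom_ext
  intro t
  apply IsZero.eq_of_src
  change IsZero (((Ext _ (ModuleCat.{0} (MvPolynomial ℕ ℂ)) i).obj (Opposite.op _)).obj M)
  refine LCVanish.ext_zero _ _ _ _ (by simp) ?_ (LCVanish.reg (i+1))
  intro r hr
  refine ⟨t.unop.unop, ?_⟩
  have hrJ : r ∈ J := by
    obtain ⟨j, -, rfl⟩ := List.mem_map.1 hr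
    exact Ideal.subset_span ⟨j, rfl⟩
  intro y
  obtain ⟨y, rfl⟩ := Ideal.Quotient.mk_surjective (I := J ^ t.unop.unop) y
  refine Ideal.Quotient.eq_zero_iff_mem.2 ?_
  exact Ideal.mul_mem_right _ _ (Ideal.pow_mem_pow hrJ _)
end

section
/- Let ν ⊆ λ be partitions. Then Σ_μ (−1)^{|μ|−|ν|} = δ_{λ,ν}, where the sum runs over all partitions μ with ν ⊆ μ ⊆ λ such that λ/μ is a horizontal strip and μ/ν is a vertical strip, and δ_{λ,ν} equals 1 if λ = ν and 0 otherwise. -/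
/-- `λ/μ` is a horizontal strip: `μ ⊆ λ` and `λ_{i+1} ≤ μ_i` for all i
(rows are 0-indexed, so `rowLen i` is the (i+1)-st part). -/
def YoungDiagram.IsHStrip (lam μ : YoungDiagram) : Prop :=
  μ ≤ lam ∧ ∀ i : ℕ, lam.rowLen (i + 1) ≤ μ.rowLen i

/-- `λ/μ` is a vertical strip: `μ ⊆ λ` and `λ_i − μ_i ≤ 1` for all i. -/
def YoungDiagram.IsVStrip (lam μ : YoungDiagram) : Prop :=
  μ ≤ lam ∧ ∀ i : ℕ, lam.rowLen i ≤ μ.rowLen i + 1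

namespace HVAux
open YoungDiagram

/-- Toggle a cell which is both addable-or-removable. -/
def toggle (μ : YoungDiagram) (c : ℕ × ℕ)
    (h1 : ∀ a, a ≤ c → a ≠ c → a ∈ μ) (h2 : ∀ a, c ≤ a → a ≠ c → a ∉ μ) : YoungDiagram where
  cells := if c ∈ μ.cells then μ.cells.erase c else insert c μ.cells
  isLowerSet := by
    intro a b hba ha
    split_ifs at ha ⊢ with hc
    · simp only [Finset.coe_erase, Set.mem_sdiff, Finset.mem_coe, Set.mem_singleton_iff] at ha ⊢
      refine ⟨μ.isLowerSet hba ha.1, ?_⟩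
      rintro rfl
      exact h2 a hba ha.2 ha.1
    · simp only [Finset.coe_insert, Set.mem_insert_iff, Finset.mem_coe] at ha ⊢
      rcases ha with rfl | ha
      · by_cases hb : b = a
        · exact Or.inl hb
        · exact Or.inr (h1 b hba hb)
      · exact Or.inr (μ.isLowerSet hba ha)

theorem mem_toggle (μ : YoungDiagram) (c : ℕ × ℕ) (h1 h2) (a : ℕ × ℕ) :
    a ∈ toggle μ c h1 h2 ↔ (a ≠ c ∧ a ∈ μ) ∨ (a = c ∧ c ∉ μ) := by
  rw [← YoungDiagram.mem_cells]
  unfold toggle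
  simp only
  split_ifs with hc
  · rw [YoungDiagram.mem_cells] at hc
    simp [hc]
  · rw [YoungDiagram.mem_cells] at hc
    simp only [Finset.mem_insert, YoungDiagram.mem_cells, hc]
    by_cases h : a = c <;> simp [h]

theorem card_toggle (μ : YoungDiagram) (c : ℕ × ℕ) (h1 h2) :
    (toggle μ c h1 h2).card + 1 = μ.card ∨ (toggle μ c h1 h2).card = μ.card + 1 := by
  unfold toggle YoungDiagram.card
  simp only
  split_ifs with hc
  · left; exact Finset.card_erase_add_one hc
  · right; exact Finset.card_insert_of_notMem hc

theorem finite_le (lam : YoungDiagram) : {μ : YoungDiagram | μ ≤ lam}.Finite := by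
  apply Set.Finite.of_finite_image (f := YoungDiagram.cells)
  · apply (lam.cells.powerset : Finset _).finite_toSet.subset
    rintro _ ⟨μ, hμ, rfl⟩
    simpa using hμ
  · intro a _ b _ hab
    exact YoungDiagram.ext hab

theorem le_of_rows {a b : YoungDiagram} (h : ∀ i, a.rowLen i ≤ b.rowLen i) : a ≤ b := by
  rintro ⟨i, j⟩ hx
  have hx' : (i, j) ∈ a := hx
  rw [YoungDiagram.mem_iff_lt_rowLen] at hx'
  exact YoungDiagram.mem_iff_lt_rowLen.2 (hx'.trans_le (h i))

theorem rows_of_le {a b : YoungDiagram} (h : a ≤ b) (i : ℕ) : a.rowLen i ≤ b.rowLen i := by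
  by_contra! hlt
  have : (i, b.rowLen i) ∈ a := YoungDiagram.mem_iff_lt_rowLen.2 hlt
  have := YoungDiagram.mem_iff_lt_rowLen.1 (h this)
  omega

theorem exists_last {lam ν : YoungDiagram} (h : ν ≤ lam) (hne : lam ≠ ν) :
    ∃ i, ν.rowLen i < lam.rowLen i ∧ ∀ r, i < r → lam.rowLen r = ν.rowLen r := by
  classical
  have hex : ∃ i, ν.rowLen i < lam.rowLen i := by
    by_contra! hc
    exact hne (le_antisymm (le_of_rows hc) h)
  have hb : ∀ i, ν.rowLen i < lam.rowLen i → i ≤ lam.colLen 0 := by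
    intro i hi
    have : (i, 0) ∈ lam := YoungDiagram.mem_iff_lt_rowLen.2 (by omega)
    exact (YoungDiagram.mem_iff_lt_colLen.1 this).le
  obtain ⟨i0, hi0⟩ := hex
  refine ⟨Nat.findGreatest (fun i => ν.rowLen i < lam.rowLen i) (lam.colLen 0), ?_, ?_⟩
  · exact Nat.findGreatest_spec (P := fun i => ν.rowLen i < lam.rowLen i) (hb _ hi0) hi0
  · intro r hr
    by_contra hc
    have h1 := rows_of_le h r
    have h2 : ν.rowLen r < lam.rowLen r := by omega
    have := Nat.le_findGreatest (P := fun i => ν.rowLen i < lam.rowLen i) (hb _ h2) h2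
    omega

section
variable {lam ν μ : YoungDiagram} {i : ℕ}

theorem below (hi : ν.rowLen i < lam.rowLen i)
    (hμ : lam.IsHStrip μ ∧ μ.IsVStrip ν) :
    ∀ a, a ≤ (i, ν.rowLen i) → a ≠ (i, ν.rowLen i) → a ∈ μ := by
  rintro ⟨r, s⟩ ⟨h1, h2⟩ hne
  simp only at h1 h2
  rw [YoungDiagram.mem_iff_lt_rowLen]
  have hνμ := rows_of_le hμ.2.1 r
  have h3 := ν.rowLen_anti r i h1
  by_cases hs : s < ν.rowLen i
  · omega
  · have : s = ν.rowLen i := by omega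
    subst this
    have hr : r < i := lt_of_le_of_ne h1 (by rintro rfl; exact hne rfl)
    have h4 := lam.rowLen_anti (r+1) i hr
    have h5 := hμ.1.2 r
    omega

theorem above (hlast : ∀ r, i < r → lam.rowLen r = ν.rowLen r)
    (hμ : lam.IsHStrip μ ∧ μ.IsVStrip ν) :
    ∀ a, (i, ν.rowLen i) ≤ a → a ≠ (i, ν.rowLen i) → a ∉ μ := by
  rintro ⟨r, s⟩ ⟨h1, h2⟩ hne
  simp only at h1 h2
  rw [YoungDiagram.mem_iff_lt_rowLen]
  have h3 := ν.rowLen_anti i r h1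
  have h4 := hμ.2.2 r
  have h5 := rows_of_le hμ.1.1 r
  rcases h1.eq_or_lt with rfl | hr
  · have : s ≠ ν.rowLen i := by rintro rfl; exact hne rfl
    omega
  · have := hlast r hr
    omega

theorem valid (hi : ν.rowLen i < lam.rowLen i)
    (hlast : ∀ r, i < r → lam.rowLen r = ν.rowLen r)
    (hμ : lam.IsHStrip μ ∧ μ.IsVStrip ν) (h1 h2) :
    lam.IsHStrip (toggle μ (i, ν.rowLen i) h1 h2) ∧
      (toggle μ (i, ν.rowLen i) h1 h2).IsVStrip ν := by
  refine ⟨⟨?_, ?_⟩, ⟨?_, ?_⟩⟩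
  · intro a ha
    rcases (mem_toggle _ _ _ _ _).1 ha with ⟨_, ha⟩ | ⟨rfl, _⟩
    · exact hμ.1.1 ha
    · exact YoungDiagram.mem_iff_lt_rowLen.2 hi
  · intro r
    by_contra! hlt
    have hn : (r, (toggle μ (i, ν.rowLen i) h1 h2).rowLen r) ∉ toggle μ (i, ν.rowLen i) h1 h2 := by
      rw [YoungDiagram.mem_iff_lt_rowLen]; omega
    generalize (toggle μ (i, ν.rowLen i) h1 h2).rowLen r = j at hlt hn
    apply hn
    rw [mem_toggle]
    left
    constructor
    · intro he
      simp only [Prod.mk.injEq] at he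
      obtain ⟨rfl, rfl⟩ := he
      have := hlast (r+1) (by omega)
      have := ν.rowLen_anti r (r+1) (by omega)
      omega
    · rw [YoungDiagram.mem_iff_lt_rowLen]
      exact hlt.trans_le (hμ.1.2 r)
  · intro a ha
    have ha' : a ∈ ν := ha
    refine (mem_toggle _ _ _ _ _).2 (Or.inl ⟨?_, hμ.2.1 ha⟩)
    rintro rfl
    rw [YoungDiagram.mem_iff_lt_rowLen] at ha'
    omega
  · intro r
    by_contra! hlt
    have hn : (r, ν.rowLen r + 1) ∈ toggle μ (i, ν.rowLen i) h1 h2 :=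
      YoungDiagram.mem_iff_lt_rowLen.2 hlt
    rcases (mem_toggle _ _ _ _ _).1 hn with ⟨_, ha⟩ | ⟨he, _⟩
    · rw [YoungDiagram.mem_iff_lt_rowLen] at ha
      have := hμ.2.2 r
      omega
    · simp only [Prod.mk.injEq] at he
      obtain ⟨rfl, he⟩ := he
      omega
end

theorem card_mono {a b : YoungDiagram} (h : a ≤ b) : a.card ≤ b.card :=
  Finset.card_le_card (YoungDiagram.cells_subset_iff.2 h)

end HVAux

open Classical in
/-- For partitions ν ⊆ λ,
`Σ_μ (−1)^{|μ|−|ν|} = δ_{λ,ν}`, the sum over all partitions μ with ν ⊆ μ ⊆ λ such that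
λ/μ is a horizontal strip and μ/ν is a vertical strip.  (Partitions are encoded as Young
diagrams; the sum is a `finsum`, the summation set being finite.) -/
theorem hstrip_vstrip_alternating_sum (lam ν : YoungDiagram) (h : ν ≤ lam) :
    (∑ᶠ (μ : YoungDiagram) (_ : lam.IsHStrip μ ∧ μ.IsVStrip ν),
        ((-1 : ℤ)) ^ (μ.card - ν.card)) =
      if lam = ν then 1 else 0 := by
  have hfin : {μ : YoungDiagram | lam.IsHStrip μ ∧ μ.IsVStrip ν}.Finite :=
    (HVAux.finite_le lam).subset fun μ hμ => hμ.1.1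
  have hsum := finsum_mem_eq_finite_toFinset_sum
    (fun μ : YoungDiagram => ((-1 : ℤ)) ^ (μ.card - ν.card)) hfin
  simp only [Set.mem_ofPred_eq] at hsum
  rw [hsum]
  split_ifs with heq
  · subst heq
    have : hfin.toFinset = {lam} := by
      ext μ
      simp only [Set.Finite.mem_toFinset, Set.mem_ofPred_eq, Finset.mem_singleton]
      constructor
      · intro hμ
        exact le_antisymm hμ.1.1 hμ.2.1
      · rintro rfl
        exact ⟨⟨le_rfl, fun i => μ.rowLen_anti i (i+1) (by omega)⟩, ⟨le_rfl, fun i => by omega⟩⟩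
    rw [this]
    simp
  · obtain ⟨i, hi, hlast⟩ := HVAux.exists_last h heq
    have hm : ∀ μ ∈ hfin.toFinset, lam.IsHStrip μ ∧ μ.IsVStrip ν := fun μ hμ => by
      simpa using hμ
    refine Finset.sum_involution
      (fun μ hμ => HVAux.toggle μ (i, ν.rowLen i) (HVAux.below hi (hm μ hμ))
        (HVAux.above hlast (hm μ hμ))) ?_ ?_ ?_ ?_
    · intro μ hμ
      have hv := HVAux.valid hi hlast (hm μ hμ) (HVAux.below hi (hm μ hμ))
        (HVAux.above hlast (hm μ hμ))
      have c1 := HVAux.card_mono (hm μ hμ).2.1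
      have c2 := HVAux.card_mono hv.2.1
      rcases HVAux.card_toggle μ (i, ν.rowLen i) (HVAux.below hi (hm μ hμ))
        (HVAux.above hlast (hm μ hμ)) with hc | hc
      · rw [← hc, Nat.sub_add_comm c2, pow_succ]; ring
      · rw [hc, Nat.sub_add_comm c1, pow_succ]; ring
    · intro μ hμ _ he
      rcases HVAux.card_toggle μ (i, ν.rowLen i) (HVAux.below hi (hm μ hμ))
        (HVAux.above hlast (hm μ hμ)) with hc | hc
      · rw [he] at hc; omega
      · rw [he] at hc; omega
    · intro μ hμ
      simpa using HVAux.valid hi hlast (hm μ hμ) (HVAux.below hi (hm μ hμ))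
        (HVAux.above hlast (hm μ hμ))
    · intro μ hμ
      apply YoungDiagram.ext
      ext a
      rw [YoungDiagram.mem_cells, YoungDiagram.mem_cells, HVAux.mem_toggle, HVAux.mem_toggle,
        HVAux.mem_toggle]
      by_cases ha : a = (i, ν.rowLen i)
      · subst ha; simp
      · simp [ha]
end
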